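/- arXiv:q-alg/9612027 — 2 statements merged into one kernel-verified Lean document; each statement's English description precedes it below -/
import Mathlib

section
/- Let n, m, Δ, Γ, k ∈ ℕ with Δ ≤ n and Γ ≤ m. Set (n₁, m₁) = (n−Δ, m), (n₂, m₂) = (n, m−Γ), and let 𝓡 = ℛ_{n−Δ,m} × ℛ_{n,m−Γ} ⊆ V. Let 𝐓 be a matrix differential operator whose components satisfy: T_{ab} = Σ_{i ≤ n_b, j ≤ m_b} M_{f^{ab}_{ij}} ∘ D_x^i ∘ D_y^j with all f^{ab}_{ij} = 0 for i + j > k, and suppose 𝐓 preserves 𝓡. Then 𝐓 is a ℂ-linear combination of compositions of elements of the generating set G = {S^+, S^−, S^0, T^+, T^−, T^0, J, K} ∪ {Q⁻_{αβ} : α ≤ Δ, β ≤ Γ} ∪ {Q⁺_{αβ} : α ≤ Δ, β ≤ Γ} ∪ {id}, each composition being a matrix differential operator of order at most k. -/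
noncomputable section

open MvPolynomial

/-- The bivariate polynomial ring `R = ℂ[x,y]`. -/
abbrev R2 : Type := MvPolynomial (Fin 2) ℂ

/-- The variable `x`. -/
def Xv : R2 := X 0

/-- The variable `y`. -/
def Yv : R2 := X 1

/-- The partial derivative `∂_x` as a `ℂ`-linear endomorphism. -/
def Dx : Module.End ℂ R2 := (pderiv (0 : Fin 2)).toLinearMap

/-- The partial derivative `∂_y` as a `ℂ`-linear endomorphism. -/
def Dy : Module.End ℂ R2 := (pderiv (1 : Fin 2)).toLinearMap

/-- Multiplication by `f` as an endomorphism. -/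
def Mf (f : R2) : Module.End ℂ R2 := LinearMap.mulLeft ℂ f

/-- All compositions (products) of at most `k` elements of `S`; the empty
composition is the identity. -/
def prodsLE (k : ℕ) (S : Set (Module.End ℂ R2)) : Set (Module.End ℂ R2) :=
  {T | ∃ l : List (Module.End ℂ R2), l.length ≤ k ∧ (∀ a ∈ l, a ∈ S) ∧ l.prod = T}

/-- The rectangular module `ℛ_{n,m}`. -/
def Rmod (n m : ℕ) : Submodule ℂ R2 :=
  Submodule.span ℂ {P : R2 | ∃ i j : ℕ, i ≤ n ∧ j ≤ m ∧ P = Xv ^ i * Yv ^ j}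

/-- The triangular module `𝒯ₙ`. -/
def Tmod (n : ℕ) : Submodule ℂ R2 :=
  Submodule.span ℂ {P : R2 | ∃ i j : ℕ, i + j ≤ n ∧ P = Xv ^ i * Yv ^ j}

/-- The staircase module `𝒮^r_{p,q}`. -/
def Smod (r p q : ℕ) : Submodule ℂ R2 :=
  Submodule.span ℂ {P : R2 | ∃ i j : ℕ, i + r * j ≤ p ∧ j ≤ q ∧ P = Xv ^ i * Yv ^ j}

/-- An endomorphism has nonpositive `y`-degree if it maps each monomial `xᵃyᵇ`
into the span of the monomials `x^c y^e` with `e ≤ b`. -/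
def NonposY (T : Module.End ℂ R2) : Prop :=
  ∀ a b : ℕ, T (Xv ^ a * Yv ^ b) ∈
    Submodule.span ℂ {P : R2 | ∃ c e : ℕ, e ≤ b ∧ P = Xv ^ c * Yv ^ e}

/-- The rank-2 space `V = R × R`. -/
abbrev V2 : Type := R2 × R2

/-- The matrix operator `𝐓(u,v) = (A u + B v, C u + D v)`. -/
def matOp (A B C D : Module.End ℂ R2) : Module.End ℂ V2 :=
  LinearMap.prod
    (A ∘ₗ LinearMap.fst ℂ R2 R2 + B ∘ₗ LinearMap.snd ℂ R2 R2)
    (C ∘ₗ LinearMap.fst ℂ R2 R2 + D ∘ₗ LinearMap.snd ℂ R2 R2)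

/-- The diagonal matrix operator `diag(A, B)`. -/
def dg (A B : Module.End ℂ R2) : Module.End ℂ V2 := matOp A 0 0 B

/-- The scalar differential operator with coefficients `f` supported on `F`. -/
def diffOp (F : Finset (ℕ × ℕ)) (f : ℕ × ℕ → R2) : Module.End ℂ R2 :=
  ∑ ij ∈ F, Mf (f ij) * Dx ^ ij.1 * Dy ^ ij.2

/-- The index set `{(i,j) : i + j ≤ k}`. -/
def ordIdx (k : ℕ) : Finset (ℕ × ℕ) :=
  (Finset.range (k + 1) ×ˢ Finset.range (k + 1)).filter (fun ij => ij.1 + ij.2 ≤ k)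

/-- A scalar differential operator with polynomial coefficients, of order at most `k`. -/
def IsDiffOpLE (A : Module.End ℂ R2) (k : ℕ) : Prop :=
  ∃ f : ℕ × ℕ → R2, A = diffOp (ordIdx k) f

/-- A matrix differential operator of order at most `k`. -/
def IsMatDiffOpLE (P : Module.End ℂ V2) (k : ℕ) : Prop :=
  ∃ A B C D : Module.End ℂ R2, IsDiffOpLE A k ∧ IsDiffOpLE B k ∧ IsDiffOpLE C k ∧
    IsDiffOpLE D k ∧ P = matOp A B C D

/-- Compositions of elements of `S` which are matrix differential operators of
order at most `k`. -/
def matProdsOrd (k : ℕ) (S : Set (Module.End ℂ V2)) : Set (Module.End ℂ V2) :=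
  {P | ∃ l : List (Module.End ℂ V2), (∀ a ∈ l, a ∈ S) ∧ l.prod = P ∧ IsMatDiffOpLE P k}

/-- Compositions of at most `k` elements of `S`; the empty composition is the identity. -/
def matProdsLE (k : ℕ) (S : Set (Module.End ℂ V2)) : Set (Module.End ℂ V2) :=
  {P | ∃ l : List (Module.End ℂ V2), l.length ≤ k ∧ (∀ a ∈ l, a ∈ S) ∧ l.prod = P}

/-- `Jx⁺(a) = M_{x²}∘D_x − a·M_x`. -/
def Jxp (a : ℕ) : Module.End ℂ R2 := Mf (Xv ^ 2) * Dx - (a : ℂ) • Mf Xv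

/-- `Jx⁰(a) = M_x∘D_x − (a/2)·id`. -/
def Jx0 (a : ℕ) : Module.End ℂ R2 := Mf Xv * Dx - ((a : ℂ) / 2) • 1

/-- `Ky⁺(a) = M_{y²}∘D_y − a·M_y`. -/
def Kyp (a : ℕ) : Module.End ℂ R2 := Mf (Yv ^ 2) * Dy - (a : ℂ) • Mf Yv

/-- `Ky⁰(a) = M_y∘D_y − (a/2)·id`. -/
def Ky0 (a : ℕ) : Module.End ℂ R2 := Mf Yv * Dy - ((a : ℂ) / 2) • 1

def Sgp (n Δ : ℕ) : Module.End ℂ V2 := dg (Jxp (n - Δ)) (Jxp n)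
def Sgm : Module.End ℂ V2 := dg Dx Dx
def Sg0 (n Δ : ℕ) : Module.End ℂ V2 := dg (Jx0 (n - Δ)) (Jx0 n)
def Tgp (m Γ : ℕ) : Module.End ℂ V2 := dg (Kyp m) (Kyp (m - Γ))
def Tgm : Module.End ℂ V2 := dg Dy Dy
def Tg0 (m Γ : ℕ) : Module.End ℂ V2 := dg (Ky0 m) (Ky0 (m - Γ))
def Jgen (n Δ : ℕ) : Module.End ℂ V2 :=
  dg ((((n : ℂ) + (Δ : ℂ)) / 2) • 1) (((n : ℂ) / 2) • 1)
def Kgen (m Γ : ℕ) : Module.End ℂ V2 :=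
  dg (((m : ℂ) / 2) • 1) ((((m : ℂ) + (Γ : ℂ)) / 2) • 1)

/-- `q̄^y_β = (∏_{t=1}^{Γ−β}(M_y∘D_y − (m−Γ+t)·id)) ∘ D_y^β`. -/
def qbarY (m Γ β : ℕ) : Module.End ℂ R2 :=
  ((List.range (Γ - β)).map
    (fun t => Mf Yv * Dy - ((m - Γ + (t + 1) : ℕ) : ℂ) • 1)).prod * Dy ^ β

/-- `q̄^x_α = (∏_{t=1}^{Δ−α}(M_x∘D_x − (n−Δ+t)·id)) ∘ D_x^α`. -/
def qbarX (n Δ α : ℕ) : Module.End ℂ R2 :=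
  ((List.range (Δ - α)).map
    (fun t => Mf Xv * Dx - ((n - Δ + (t + 1) : ℕ) : ℂ) • 1)).prod * Dx ^ α

/-- `Q⁻_{αβ}(u,v) = (0, x^α·(q̄^y_β u))`. -/
def Qgm (m Γ α β : ℕ) : Module.End ℂ V2 := matOp 0 0 (Mf (Xv ^ α) * qbarY m Γ β) 0

/-- `Q⁺_{αβ}(u,v) = (q̄^x_α (y^β·v), 0)`. -/
def Qgp (n Δ α β : ℕ) : Module.End ℂ V2 := matOp 0 (qbarX n Δ α * Mf (Yv ^ β)) 0 0

/-- The generating set `G` for the rectangular rank-2 module. -/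
def Grect (n m Δ Γ : ℕ) : Set (Module.End ℂ V2) :=
  {Sgp n Δ, Sgm, Sg0 n Δ, Tgp m Γ, Tgm, Tg0 m Γ, Jgen n Δ, Kgen m Γ} ∪
  {P | ∃ α ≤ Δ, ∃ β ≤ Γ, P = Qgm m Γ α β} ∪
  {P | ∃ α ≤ Δ, ∃ β ≤ Γ, P = Qgp n Δ α β} ∪ {1}

/-- The rectangular index set `{(i,j) : i ≤ a, j ≤ b}`. -/
def rectIdx (a b : ℕ) : Finset (ℕ × ℕ) := Finset.range (a + 1) ×ˢ Finset.range (b + 1)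


namespace S15

/-! ### Polynomial functions -/

/-- `E`-valued polynomial functions with coefficients of `p^i` in the span of `U i`. -/
def PolS {E : Type} [AddCommGroup E] [Module ℂ E] (N : ℕ) (U : ℕ → Set E) :
    Submodule ℂ (ℕ → E) :=
  Submodule.span ℂ {f | ∃ i, i < N ∧ ∃ w ∈ U i, f = fun p : ℕ => ((p : ℂ) ^ i) • w}

theorem PolS_div {E : Type} [AddCommGroup E] [Module ℂ E] (N : ℕ) (U : ℕ → Set E)
    (hU : ∀ i j, i ≤ j → U j ⊆ U i) (z : ℕ) (f : ℕ → E) (hf : f ∈ PolS N U) :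
    ∃ g ∈ PolS (N - 1) (fun i => U (i + 1)),
      ∀ p : ℕ, f p - f z = ((p : ℂ) - z) • g p := by
  unfold PolS at hf
  induction hf using Submodule.span_induction with
  | mem f hf =>
    obtain ⟨i, hi, w, hw, rfl⟩ := hf
    refine ⟨∑ l ∈ Finset.range i, ((z : ℂ) ^ (i - 1 - l)) • fun p : ℕ => ((p : ℂ) ^ l) • w, ?_, ?_⟩
    · refine Submodule.sum_mem _ fun l hl => Submodule.smul_mem _ _ (Submodule.subset_span ?_)
      have := Finset.mem_range.1 hl
      exact ⟨l, by omega, w, hU _ _ (by omega) hw, rfl⟩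
    · intro p
      simp only [Finset.sum_apply, Pi.smul_apply, smul_smul, ← Finset.sum_smul, ← sub_smul]
      congr 1
      rw [mul_comm, ← (Commute.all (p : ℂ) (z : ℂ)).geom_sum₂_mul]
      congr 1
      exact Finset.sum_congr rfl fun _ _ => mul_comm _ _
  | zero => exact ⟨0, Submodule.zero_mem _, by simp⟩
  | add f f' _ _ h h' =>
    obtain ⟨g, hg, h⟩ := h
    obtain ⟨g', hg', h'⟩ := h'
    refine ⟨g + g', Submodule.add_mem _ hg hg', fun p => ?_⟩
    simp only [Pi.add_apply, smul_add, ← h, ← h']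
    abel
  | smul a f _ h =>
    obtain ⟨g, hg, h⟩ := h
    refine ⟨a • g, Submodule.smul_mem _ _ hg, fun p => ?_⟩
    simp only [Pi.smul_apply]
    rw [smul_comm, ← h, smul_sub]

theorem PolS_divs {E : Type} [AddCommGroup E] [Module ℂ E] (Z : Finset ℕ) :
    ∀ (N : ℕ) (U : ℕ → Set E)
    (_ : ∀ i j, i ≤ j → U j ⊆ U i) (f : ℕ → E) (_ : f ∈ PolS N U)
    (_ : ∀ z ∈ Z, f z = 0),
    ∃ g ∈ PolS (N - Z.card) (fun i => U (i + Z.card)),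
      ∀ p : ℕ, f p = (∏ z ∈ Z, ((p : ℂ) - z)) • g p := by
  induction Z using Finset.induction_on with
  | empty => intro N U _ f hf _; exact ⟨f, by simpa using hf, by simp⟩
  | insert a Z ha ih =>
    intro N U hU f hf hz
    obtain ⟨g, hg, h⟩ := PolS_div N U hU a f hf
    have ha0 : f a = 0 := hz a (Finset.mem_insert_self _ _)
    simp only [ha0, sub_zero] at h
    obtain ⟨g', hg', h'⟩ := ih (N - 1) (fun i => U (i + 1)) (fun i j hij => hU _ _ (by omega)) g hg
      (by
        intro z hzZ
        have h1 := h z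
        rw [hz z (Finset.mem_insert_of_mem hzZ)] at h1
        rcases smul_eq_zero.1 h1.symm with h2 | h2
        · exfalso
          have : (z : ℂ) = a := sub_eq_zero.1 h2
          have : z = a := by exact_mod_cast this
          exact ha (this ▸ hzZ)
        · exact h2)
    refine ⟨g', ?_, fun p => ?_⟩
    · rw [Finset.card_insert_of_notMem ha]
      have e1 : N - (Z.card + 1) = N - 1 - Z.card := by omega
      rw [e1]
      simpa only [add_assoc] using hg'
    · rw [h, h', Finset.prod_insert ha, smul_smul]

theorem PolS_zero {E : Type} [AddCommGroup E] [Module ℂ E] (N : ℕ) (U : ℕ → Set E)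
    (hU : ∀ i j, i ≤ j → U j ⊆ U i) (f : ℕ → E) (hf : f ∈ PolS N U)
    (h0 : ∀ p < N, f p = 0) (p : ℕ) : f p = 0 := by
  obtain ⟨g, hg, h⟩ := PolS_divs (Finset.range N) N U hU f hf (by simpa using h0)
  have : g = 0 := by
    have : g ∈ PolS 0 (fun i => U (i + (Finset.range N).card)) := by simpa using hg
    simpa [PolS] using this
  rw [h, this]; simp

/-- Span of the two-variable monomial functions. -/
def S2 (N M k : ℕ) : Submodule ℂ (ℕ → ℕ → ℂ) :=
  Submodule.span ℂ {f | ∃ i j, i < N ∧ j < M ∧ i + j ≤ k ∧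
    f = fun p q : ℕ => (p : ℂ) ^ i * (q : ℂ) ^ j}

theorem fall_mem (i : ℕ) : (fun p : ℕ => ((p.descFactorial i : ℕ) : ℂ)) ∈
    Submodule.span ℂ {f : ℕ → ℂ | ∃ a, a ≤ i ∧ f = fun p : ℕ => (p : ℂ) ^ a} := by
  induction i with
  | zero => exact Submodule.subset_span ⟨0, le_rfl, by ext; simp⟩
  | succ i ih =>
    have e : (fun p : ℕ => ((p.descFactorial (i + 1) : ℕ) : ℂ)) =
        fun p : ℕ => ((p : ℂ) - i) * ((p.descFactorial i : ℕ) : ℂ) := by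
      ext p
      rw [Nat.descFactorial_succ]
      rcases le_or_gt i p with h | h
      · push_cast [h]; ring
      · simp [Nat.descFactorial_eq_zero_iff_lt.2 h]
    rw [e]
    have key : ∀ g ∈ Submodule.span ℂ {f : ℕ → ℂ | ∃ a, a ≤ i ∧ f = fun p : ℕ => (p : ℂ) ^ a},
        (fun p : ℕ => ((p : ℂ) - i) * g p) ∈
        Submodule.span ℂ {f : ℕ → ℂ | ∃ a, a ≤ i + 1 ∧ f = fun p : ℕ => (p : ℂ) ^ a} := by
      intro g hg
      induction hg using Submodule.span_induction with
      | mem f hf =>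
        obtain ⟨a, ha, rfl⟩ := hf
        have e2 : (fun p : ℕ => ((p : ℂ) - i) * (p : ℂ) ^ a) =
          (fun p : ℕ => (p : ℂ) ^ (a + 1)) - (i : ℂ) • fun p : ℕ => (p : ℂ) ^ a := by
          ext p; simp; ring
        rw [e2]
        exact Submodule.sub_mem _ (Submodule.subset_span ⟨a + 1, by omega, rfl⟩)
          (Submodule.smul_mem _ _ (Submodule.subset_span ⟨a, by omega, rfl⟩))
      | zero =>
        simp only [Pi.zero_apply, mul_zero]
        exact Submodule.zero_mem _
      | add f f' _ _ h h' =>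
        convert Submodule.add_mem _ h h' using 1
        ext p; simp; ring
      | smul a f _ h =>
        convert Submodule.smul_mem _ a h using 1
        ext p; simp; ring
    exact key _ ih

theorem fall2_mem (N M k i j : ℕ) (hi : i < N) (hj : j < M) (hk : i + j ≤ k) :
    (fun p q : ℕ => ((p.descFactorial i : ℕ) : ℂ) * ((q.descFactorial j : ℕ) : ℂ)) ∈ S2 N M k := by
  have key : ∀ g ∈ Submodule.span ℂ {f : ℕ → ℂ | ∃ a, a ≤ i ∧ f = fun p : ℕ => (p : ℂ) ^ a},
      ∀ h ∈ Submodule.span ℂ {f : ℕ → ℂ | ∃ a, a ≤ j ∧ f = fun p : ℕ => (p : ℂ) ^ a},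
      (fun p q : ℕ => g p * h q) ∈ S2 N M k := by
    intro g hg h hh
    induction hg, hh using Submodule.span_induction₂ with
    | mem_mem f f' hf hf' =>
      obtain ⟨a, ha, rfl⟩ := hf
      obtain ⟨b, hb, rfl⟩ := hf'
      exact Submodule.subset_span ⟨a, b, by omega, by omega, by omega, rfl⟩
    | zero_left =>
      simp only [Pi.zero_apply, zero_mul]
      exact Submodule.zero_mem _
    | zero_right =>
      simp only [Pi.zero_apply, mul_zero]
      exact Submodule.zero_mem _
    | add_left x y z _ _ _ h h' =>
      convert Submodule.add_mem _ h h' using 1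
      ext p; simp; ring
    | add_right x y z _ _ _ h h' =>
      convert Submodule.add_mem _ h h' using 1
      ext p; simp; ring
    | smul_left a f _ _ _ h =>
      convert Submodule.smul_mem _ a h using 1
      ext p; simp; ring
    | smul_right a f _ _ _ h =>
      convert Submodule.smul_mem _ a h using 1
      ext p; simp; ring
  exact key _ (fall_mem i) _ (fall_mem j)

/-- Swapping the two arguments as a linear map. -/
def flipL : (ℕ → ℕ → ℂ) →ₗ[ℂ] (ℕ → ℕ → ℂ) where
  toFun f := fun q p => f p q
  map_add' _ _ := rfl
  map_smul' _ _ := rfl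

/-- Multiplication by a function of the first argument. -/
def mulFst (g : ℕ → ℂ) : (ℕ → ℕ → ℂ) →ₗ[ℂ] (ℕ → ℕ → ℂ) where
  toFun f := fun p q => g p * f p q
  map_add' _ _ := by ext; simp; ring
  map_smul' _ _ := by ext; simp; ring

theorem span_map_le {E E' : Type} [AddCommGroup E] [Module ℂ E] [AddCommGroup E'] [Module ℂ E']
    (L : E →ₗ[ℂ] E') (s : Set E) (P : Submodule ℂ E') (h : ∀ x ∈ s, L x ∈ P) (x : E)
    (hx : x ∈ Submodule.span ℂ s) : L x ∈ P := by
  have : Submodule.span ℂ s ≤ P.comap L := Submodule.span_le.2 h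
  exact this hx

theorem poly_main (N M k : ℕ) (Z Z' : Finset ℕ) (c : ℕ → ℕ → ℂ) (hc : c ∈ S2 (N + 1) (M + 1) k)
    (h1 : ∀ p ∈ Z, ∀ q ≤ M, c p q = 0) (h2 : ∀ p ≤ N, ∀ q ∈ Z', c p q = 0) :
    c ∈ Submodule.span ℂ {f : ℕ → ℕ → ℂ | ∃ i j, i + Z.card ≤ N ∧ j + Z'.card ≤ M ∧
      Z.card + Z'.card + i + j ≤ k ∧
      f = fun p q : ℕ => ((∏ z ∈ Z, ((p : ℂ) - z)) * (p : ℂ) ^ i) *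
        ((∏ z ∈ Z', ((q : ℂ) - z)) * (q : ℂ) ^ j)} := by
  have h1' : ∀ p ∈ Z, c p = 0 := by
    intro p hp
    have hm : c p ∈ PolS (M + 1) (fun _ => (Set.univ : Set ℂ)) := by
      refine span_map_le (LinearMap.proj (R := ℂ) (φ := fun _ : ℕ => ℕ → ℂ) p) _ _ ?_ c hc
      rintro _ ⟨i, j, hi, hj, hk, rfl⟩
      refine Submodule.subset_span ⟨j, hj, (p : ℂ) ^ i, trivial, ?_⟩
      ext q; simp [mul_comm]
    ext q
    exact PolS_zero _ _ (fun _ _ _ => le_rfl) _ hm (fun q hq => h1 p hp q (by omega)) q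
  have h2' : ∀ q ∈ Z', flipL c q = 0 := by
    intro q hq
    have hm : flipL c q ∈ PolS (N + 1) (fun _ => (Set.univ : Set ℂ)) := by
      refine span_map_le
        ((LinearMap.proj (R := ℂ) (φ := fun _ : ℕ => ℕ → ℂ) q) ∘ₗ flipL) _ _ ?_ c hc
      rintro _ ⟨i, j, hi, hj, hk, rfl⟩
      refine Submodule.subset_span ⟨i, hi, (q : ℂ) ^ j, trivial, ?_⟩
      ext p; simp [flipL]
    ext p
    exact PolS_zero _ _ (fun _ _ _ => le_rfl) _ hm (fun p hp => h2 p (by omega) q hq) p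
  obtain ⟨g, hg, hcg⟩ := PolS_divs Z (N + 1)
    (fun i => {w : ℕ → ℂ | ∃ j, j < M + 1 ∧ i + j ≤ k ∧ w = fun q : ℕ => (q : ℂ) ^ j})
    (by rintro i j hij _ ⟨l, h, h', rfl⟩; exact ⟨l, h, by omega, rfl⟩) c
    (by
      refine Submodule.span_mono ?_ hc
      rintro _ ⟨i, j, hi, hj, hk, rfl⟩
      exact ⟨i, hi, _, ⟨j, hj, hk, rfl⟩, by ext; simp⟩) h1'
  obtain ⟨g', hg', hcg'⟩ := PolS_divs Z' (M + 1)
    (fun j => {w : ℕ → ℂ | ∃ i, i < N + 1 - Z.card ∧ i + Z.card + j ≤ k ∧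
      w = fun p : ℕ => (∏ z ∈ Z, ((p : ℂ) - z)) * (p : ℂ) ^ i})
    (by rintro i j hij _ ⟨l, h, h', rfl⟩; exact ⟨l, h, by omega, rfl⟩) (flipL c)
    (by
      have e : c = mulFst (fun p : ℕ => ∏ z ∈ Z, ((p : ℂ) - z)) g := by
        ext p q; rw [hcg]; rfl
      rw [e]
      refine span_map_le (flipL ∘ₗ mulFst (fun p : ℕ => ∏ z ∈ Z, ((p : ℂ) - z))) _ _ ?_ g hg
      rintro _ ⟨i, hi, _, ⟨j, hj, hk, rfl⟩, rfl⟩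
      refine Submodule.subset_span ⟨j, hj, _, ⟨i, hi, hk, rfl⟩, ?_⟩
      ext q p; simp [flipL, mulFst]; ring) h2'
  have e : c = flipL (mulFst (fun q : ℕ => ∏ z ∈ Z', ((q : ℂ) - z)) g') := by
    ext p q
    have := congrFun (hcg' q) p
    exact this
  rw [e]
  refine span_map_le (flipL ∘ₗ mulFst (fun q : ℕ => ∏ z ∈ Z', ((q : ℂ) - z))) _ _ ?_ g' hg'
  rintro _ ⟨j, hj, _, ⟨i, hi, hk, rfl⟩, rfl⟩
  refine Submodule.subset_span ⟨i, j, by omega, by omega, by omega, ?_⟩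
  ext q p; simp [flipL, mulFst]; ring

/-! ### Monomials and weighted shifts -/

/-- The exponent vector `(p, q)`. -/
def ex (p q : ℕ) : Fin 2 →₀ ℕ := Finsupp.single 0 p + Finsupp.single 1 q

/-- The monomial `x^p y^q`. -/
def mon (p q : ℕ) : R2 := Xv ^ p * Yv ^ q

@[simp] theorem ex_zero (p q : ℕ) : ex p q 0 = p := by simp [ex]
@[simp] theorem ex_one (p q : ℕ) : ex p q 1 = q := by simp [ex]

theorem ex_eta (d : Fin 2 →₀ ℕ) : ex (d 0) (d 1) = d := by
  ext i; fin_cases i <;> simp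

theorem ex_inj {p q p' q' : ℕ} : ex p q = ex p' q' ↔ p = p' ∧ q = q' := by
  constructor
  · intro h
    exact ⟨by simpa using DFunLike.congr_fun h 0, by simpa using DFunLike.congr_fun h 1⟩
  · rintro ⟨rfl, rfl⟩; rfl

theorem mon_eq (p q : ℕ) : mon p q = monomial (ex p q) (1 : ℂ) := by
  rw [mon, Xv, Yv, X_pow_eq_monomial, X_pow_eq_monomial, monomial_mul, ex, one_mul]

theorem coeff_mon (d : Fin 2 →₀ ℕ) (p q : ℕ) :
    coeff d (mon p q) = if d = ex p q then 1 else 0 := by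
  rw [mon_eq, coeff_monomial]
  simp only [eq_comm]

theorem ext_mon {A B : Module.End ℂ R2} (h : ∀ p q, A (mon p q) = B (mon p q)) : A = B := by
  refine (basisMonomials (Fin 2) ℂ).ext fun d => ?_
  have := h (d 0) (d 1)
  rwa [mon_eq, ex_eta] at this

/-- The weighted shift `x^p y^q ↦ c(p,q) x^{p+s} y^{q+t}`. -/
def Sh (s t : ℤ) : (ℕ → ℕ → ℂ) →ₗ[ℂ] Module.End ℂ R2 where
  toFun c := (basisMonomials (Fin 2) ℂ).constr ℂ
    (fun d => c (d 0) (d 1) • mon ((d 0 : ℤ) + s).toNat ((d 1 : ℤ) + t).toNat)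
  map_add' c c' := by
    refine (basisMonomials (Fin 2) ℂ).ext fun d => ?_
    simp only [Module.Basis.constr_basis, LinearMap.add_apply, Pi.add_apply, add_smul]
  map_smul' a c := by
    refine (basisMonomials (Fin 2) ℂ).ext fun d => ?_
    simp only [Module.Basis.constr_basis, LinearMap.smul_apply, Pi.smul_apply, smul_assoc,
      RingHom.id_apply]

theorem Sh_mon (s t : ℤ) (c : ℕ → ℕ → ℂ) (p q : ℕ) :
    Sh s t c (mon p q) = c p q • mon ((p : ℤ) + s).toNat ((q : ℤ) + t).toNat := by
  have h : mon p q = basisMonomials (Fin 2) ℂ (ex p q) := by rw [mon_eq]; rfl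
  rw [h]
  simp only [Sh, LinearMap.coe_mk, AddHom.coe_mk, Module.Basis.constr_basis, ex_zero, ex_one]

theorem Mx_mon (p q : ℕ) : Mf Xv (mon p q) = mon (p + 1) q := by
  simp only [Mf, mon, LinearMap.mulLeft_apply]; ring

theorem My_mon (p q : ℕ) : Mf Yv (mon p q) = mon p (q + 1) := by
  simp only [Mf, mon, LinearMap.mulLeft_apply]; ring

theorem Dx_mon (p q : ℕ) : Dx (mon p q) = (p : ℂ) • mon (p - 1) q := by
  rw [mon_eq, mon_eq, Dx]
  simp only [Derivation.coeFn_coe, pderiv_monomial, ex_zero, one_mul, smul_monomial, smul_eq_mul,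
    mul_one]
  rw [show ex p q - Finsupp.single 0 1 = ex (p - 1) q by
    ext i; fin_cases i <;> simp [ex]]

theorem Dy_mon (p q : ℕ) : Dy (mon p q) = (q : ℂ) • mon p (q - 1) := by
  rw [mon_eq, mon_eq, Dy]
  simp only [Derivation.coeFn_coe, pderiv_monomial, ex_one, one_mul, smul_monomial, smul_eq_mul,
    mul_one]
  rw [show ex p q - Finsupp.single 1 1 = ex p (q - 1) by
    ext i; fin_cases i <;> simp [ex]]

theorem D_pow (D : Module.End ℂ R2) (v : ℕ → R2) (hD : ∀ p, D (v p) = (p : ℂ) • v (p - 1))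
    (e p : ℕ) : (D ^ e) (v p) = ((p.descFactorial e : ℕ) : ℂ) • v (p - e) := by
  induction e with
  | zero => simp
  | succ e ih =>
    rw [pow_succ', Module.End.mul_apply, ih, map_smul, hD, smul_smul, Nat.descFactorial_succ,
      Nat.sub_sub]
    push_cast
    rw [mul_comm]

theorem Dxy_mon (i j p q : ℕ) : (Dx ^ i * Dy ^ j) (mon p q) =
    (((p.descFactorial i : ℕ) : ℂ) * ((q.descFactorial j : ℕ) : ℂ)) • mon (p - i) (q - j) := by
  rw [Module.End.mul_apply, D_pow Dy (fun q => mon p q) (fun q => Dy_mon p q), map_smul,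
    D_pow Dx (fun p => mon p (q - j)) (fun p => Dx_mon p _), smul_smul, mul_comm]

theorem mon_mul (p q p' q' : ℕ) : mon p q * mon p' q' = mon (p + p') (q + q') := by
  simp only [mon]; ring

/-- coefficient of `x^{i+s} y^{j+t}` in `f`, zero if an exponent is negative. -/
def gam (f : R2) (i j : ℕ) (st : ℤ × ℤ) : ℂ :=
  if 0 ≤ (i : ℤ) + st.1 ∧ 0 ≤ (j : ℤ) + st.2 then
    coeff (ex ((i : ℤ) + st.1).toNat ((j : ℤ) + st.2).toNat) f else 0

theorem expand (f : R2) (i j : ℕ) (B : Finset (ℤ × ℤ))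
    (hB : ∀ d ∈ f.support, ((d 0 : ℤ) - i, (d 1 : ℤ) - j) ∈ B) :
    f = ∑ st ∈ B, gam f i j st • mon ((i : ℤ) + st.1).toNat ((j : ℤ) + st.2).toNat := by
  ext d
  rw [coeff_sum]
  simp only [coeff_smul, coeff_mon, smul_eq_mul]
  rw [Finset.sum_eq_single ((d 0 : ℤ) - i, (d 1 : ℤ) - j)]
  · simp [gam, ex_eta]
  · rintro ⟨s, t⟩ _ hne
    by_cases h : 0 ≤ (i : ℤ) + s ∧ 0 ≤ (j : ℤ) + t
    · rw [if_neg, mul_zero]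
      intro hd
      apply hne
      rw [hd]
      simp only [ex_zero, ex_one, Int.toNat_of_nonneg h.1, Int.toNat_of_nonneg h.2]
      ext <;> simp
    · simp [gam, h]
  · intro hn
    have : d ∉ f.support := fun h => hn (hB d h)
    rw [notMem_support_iff] at this
    simp [gam, ex_eta, this]

/-- Falling factorial product. -/
def fall2 (i j : ℕ) : ℕ → ℕ → ℂ :=
  fun p q => ((p.descFactorial i : ℕ) : ℂ) * ((q.descFactorial j : ℕ) : ℂ)

theorem term_eq (f : R2) (i j : ℕ) (B : Finset (ℤ × ℤ))
    (hB : ∀ d ∈ f.support, ((d 0 : ℤ) - i, (d 1 : ℤ) - j) ∈ B) :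
    Mf f * Dx ^ i * Dy ^ j = ∑ st ∈ B, gam f i j st • Sh st.1 st.2 (fall2 i j) := by
  apply ext_mon
  intro p q
  rw [mul_assoc, Module.End.mul_apply, Dxy_mon, LinearMap.sum_apply]
  simp only [LinearMap.smul_apply, Sh_mon, fall2]
  by_cases hp : i ≤ p
  · by_cases hq : j ≤ q
    · conv_lhs => rw [expand f i j B hB]
      simp only [Mf, LinearMap.mulLeft_apply, Finset.sum_mul]
      refine Finset.sum_congr rfl fun st _ => ?_
      by_cases h : 0 ≤ (i : ℤ) + st.1 ∧ 0 ≤ (j : ℤ) + st.2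
      · rw [smul_mul_smul_comm, mon_mul, smul_smul]
        congr 2 <;> omega
      · simp [gam, h]
    · simp [Nat.descFactorial_eq_zero_iff_lt.2 (not_le.1 hq)]
  · simp [Nat.descFactorial_eq_zero_iff_lt.2 (not_le.1 hp)]

theorem Rmod_coeff (n m : ℕ) (w : R2) (hw : w ∈ Rmod n m) (d : Fin 2 →₀ ℕ)
    (hd : n < d 0 ∨ m < d 1) : coeff d w = 0 := by
  unfold Rmod at hw
  induction hw using Submodule.span_induction with
  | mem w hw =>
    obtain ⟨i, j, hi, hj, rfl⟩ := hw
    change coeff d (mon i j) = 0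
    rw [coeff_mon, if_neg]
    rintro rfl
    simp at hd; omega
  | zero => simp
  | add x y _ _ h h' => simp [h, h']
  | smul a x _ h => simp [h]

/-- Forced zeros of the weight of a shift by `s` mapping degree `≤ N1` to degree `≤ N2`. -/
def ZZ (N1 N2 : ℕ) (s : ℤ) : Finset ℕ :=
  (Finset.range (N1 + 1)).filter (fun p => ¬ (0 ≤ (p : ℤ) + s ∧ (p : ℤ) + s ≤ N2))

/-- The minimal weight polynomial. -/
def phi (N1 N2 : ℕ) (s : ℤ) (p : ℕ) : ℂ := ∏ z ∈ ZZ N1 N2 s, ((p : ℂ) - z)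

theorem scalar_main (N1 M1 N2 M2 k : ℕ) (f : ℕ × ℕ → R2)
    (hf : ∀ ij : ℕ × ℕ, k < ij.1 + ij.2 → f ij = 0)
    (hpres : ∀ w ∈ Rmod N1 M1, diffOp (rectIdx N1 M1) f w ∈ Rmod N2 M2)
    (H : ℕ → Submodule ℂ (Module.End ℂ R2)) (hmono : Monotone H)
    (hH : ∀ s t, (ZZ N1 N2 s).card ≤ N1 → (ZZ M1 M2 t).card ≤ M1 → ∀ i j,
      Sh s t (fun p q => (phi N1 N2 s p * (p : ℂ) ^ i) * (phi M1 M2 t q * (q : ℂ) ^ j)) ∈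
        H ((ZZ N1 N2 s).card + (ZZ M1 M2 t).card + i + j)) :
    diffOp (rectIdx N1 M1) f ∈ H k := by
  set B : Finset (ℤ × ℤ) := (rectIdx N1 M1).biUnion
    (fun ij => (f ij).support.image (fun d => ((d 0 : ℤ) - ij.1, (d 1 : ℤ) - ij.2))) with hBdef
  set c : ℤ × ℤ → ℕ → ℕ → ℂ := fun st =>
    ∑ ij ∈ rectIdx N1 M1, gam (f ij) ij.1 ij.2 st • fall2 ij.1 ij.2 with hc
  have hA : diffOp (rectIdx N1 M1) f = ∑ st ∈ B, Sh st.1 st.2 (c st) := by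
    rw [diffOp]
    rw [Finset.sum_congr rfl (fun ij hij => term_eq (f ij) ij.1 ij.2 B (by
      intro d hd
      rw [hBdef, Finset.mem_biUnion]
      exact ⟨ij, hij, Finset.mem_image.2 ⟨d, hd, rfl⟩⟩))]
    rw [Finset.sum_comm]
    refine Finset.sum_congr rfl fun st _ => ?_
    simp only [hc, map_sum, map_smul]
  have hneg : ∀ (st : ℤ × ℤ) (p q : ℕ), ¬ (0 ≤ (p : ℤ) + st.1 ∧ 0 ≤ (q : ℤ) + st.2) →
      c st p q = 0 := by
    intro st p q h
    simp only [hc, Finset.sum_apply, Pi.smul_apply, fall2, smul_eq_mul]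
    refine Finset.sum_eq_zero fun ij _ => ?_
    by_cases h' : 0 ≤ (ij.1 : ℤ) + st.1 ∧ 0 ≤ (ij.2 : ℤ) + st.2
    · have : p < ij.1 ∨ q < ij.2 := by omega
      rcases this with h2 | h2 <;> simp [Nat.descFactorial_eq_zero_iff_lt.2 h2]
    · simp [gam, h']
  have hvan : ∀ st ∈ B, ∀ p ≤ N1, ∀ q ≤ M1,
      ¬ ((0 ≤ (p : ℤ) + st.1 ∧ (p : ℤ) + st.1 ≤ N2) ∧
        (0 ≤ (q : ℤ) + st.2 ∧ (q : ℤ) + st.2 ≤ M2)) → c st p q = 0 := by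
    intro st hst p hp q hq hn
    by_cases h : 0 ≤ (p : ℤ) + st.1 ∧ 0 ≤ (q : ℤ) + st.2
    swap
    · exact hneg st p q h
    have h1 := Rmod_coeff _ _ _ (hpres (mon p q) (Submodule.subset_span ⟨p, q, hp, hq, rfl⟩))
      (ex ((p : ℤ) + st.1).toNat ((q : ℤ) + st.2).toNat) (by simp only [ex_zero, ex_one]; omega)
    rw [hA, LinearMap.sum_apply, coeff_sum, Finset.sum_eq_single st] at h1
    · simpa [Sh_mon, coeff_mon] using h1
    · intro st' _ hne
      rw [Sh_mon, coeff_smul, coeff_mon]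
      by_cases h' : 0 ≤ (p : ℤ) + st'.1 ∧ 0 ≤ (q : ℤ) + st'.2
      · rw [if_neg, smul_zero]
        rw [ex_inj]
        intro h2
        apply hne
        ext <;> omega
      · rw [hneg st' p q h', zero_smul]
    · intro h; exact absurd hst h
  rw [hA]
  refine Submodule.sum_mem _ fun st hst => ?_
  refine span_map_le (Sh st.1 st.2) _ _ ?_ (c st)
    (poly_main N1 M1 k (ZZ N1 N2 st.1) (ZZ M1 M2 st.2) (c st) ?_ ?_ ?_)
  · rintro _ ⟨i, j, hi, hj, hk, rfl⟩
    exact hmono hk (hH st.1 st.2 (by omega) (by omega) i j)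
  · refine Submodule.sum_mem _ fun ij hij => ?_
    by_cases hk : k < ij.1 + ij.2
    · have : gam (f ij) ij.1 ij.2 st = 0 := by simp [gam, hf ij hk]
      rw [this, zero_smul]; exact Submodule.zero_mem _
    · rw [rectIdx, Finset.mem_product, Finset.mem_range, Finset.mem_range] at hij
      exact Submodule.smul_mem _ _ (fall2_mem _ _ _ _ _ hij.1 hij.2 (by omega))
  · intro p hp q hq
    simp only [ZZ, Finset.mem_filter, Finset.mem_range] at hp
    exact hvan st hst p (by omega) q hq (by tauto)
  · intro p hp q hq
    simp only [ZZ, Finset.mem_filter, Finset.mem_range] at hq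
    exact hvan st hst p hp q (by omega) (by tauto)

/-! ### One-variable identities -/

/-- The raising operator built from abstract `M`, `D`. -/
def Jp (M D : Module.End ℂ R2) (a : ℕ) : Module.End ℂ R2 := M ^ 2 * D - (a : ℂ) • M

/-- The operator `q̄_α` built from abstract `M`, `D`. -/
def qb (M D : Module.End ℂ R2) (N r α : ℕ) : Module.End ℂ R2 :=
  ((List.range (r - α)).map (fun t => M * D - ((N + (t + 1) : ℕ) : ℂ) • 1)).prod * D ^ α

/-- Power of raising or lowering operator. -/
def RL (M D : Module.End ℂ R2) (a : ℕ) (b : Bool) (e : ℕ) : Module.End ℂ R2 :=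
  if b then Jp M D a ^ e else D ^ e

section
variable (M D : Module.End ℂ R2) (v : ℕ → R2) (hM : ∀ p, M (v p) = v (p + 1))
  (hD : ∀ p, D (v p) = (p : ℂ) • v (p - 1))

theorem M_pow (hM : ∀ p, M (v p) = v (p + 1)) (e p : ℕ) : (M ^ e) (v p) = v (p + e) := by
  induction e with
  | zero => simp
  | succ e ih => rw [pow_succ', Module.End.mul_apply, ih, hM]; rfl

theorem MD (hM : ∀ p, M (v p) = v (p + 1))
    (hD : ∀ p, D (v p) = (p : ℂ) • v (p - 1)) (p : ℕ) : M (D (v p)) = (p : ℂ) • v p := by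
  rw [hD, map_smul, hM]
  rcases p with _ | p
  · simp
  · simp

theorem Jp_pow (hM : ∀ p, M (v p) = v (p + 1))
    (hD : ∀ p, D (v p) = (p : ℂ) • v (p - 1)) (a e p : ℕ) (he : e ≤ a + 1) :
    (Jp M D a ^ e) (v p) = (∏ z ∈ Finset.Ico (a + 1 - e) (a + 1), ((p : ℂ) - z)) • v (p + e) := by
  induction e with
  | zero => simp
  | succ e ih =>
    have e1 : Finset.Ico (a + 1 - (e + 1)) (a + 1) =
        insert (a - e) (Finset.Ico (a + 1 - e) (a + 1)) := by
      ext z; simp only [Finset.mem_Ico, Finset.mem_insert]; omega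
    rw [pow_succ', Module.End.mul_apply, ih (by omega), map_smul, e1,
      Finset.prod_insert (by simp only [Finset.mem_Ico]; omega), Jp, LinearMap.sub_apply,
      LinearMap.smul_apply, Module.End.mul_apply, pow_two, Module.End.mul_apply, MD M D v hM hD,
      map_smul, hM, ← sub_smul, smul_smul]
    congr 1
    have : ((a - e : ℕ) : ℂ) = (a : ℂ) - e := by
      rw [Nat.cast_sub (by omega)]
    rw [this]; push_cast; ring

theorem D_pow' (hD : ∀ p, D (v p) = (p : ℂ) • v (p - 1)) (e p : ℕ) :
    (D ^ e) (v p) = (∏ z ∈ Finset.range e, ((p : ℂ) - z)) • v (p - e) := by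
  induction e with
  | zero => simp
  | succ e ih =>
    rw [pow_succ', Module.End.mul_apply, ih, map_smul, hD, smul_smul, Finset.prod_range_succ,
      Nat.sub_sub]
    rcases le_or_gt e p with h | h
    · rw [Nat.cast_sub h]
    · rw [Finset.prod_eq_zero (Finset.mem_range.2 h) (by simp)]; simp

theorem list_act (hM : ∀ p, M (v p) = v (p + 1))
    (hD : ∀ p, D (v p) = (p : ℂ) • v (p - 1)) (N r p : ℕ) :
    (((List.range r).map (fun t => M * D - ((N + (t + 1) : ℕ) : ℂ) • 1)).prod) (v p) =
      (∏ t ∈ Finset.range r, ((p : ℂ) - (N + (t + 1) : ℕ))) • v p := by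
  induction r with
  | zero => simp
  | succ r ih =>
    rw [List.range_succ, List.map_append, List.prod_append, Module.End.mul_apply,
      Finset.prod_range_succ]
    simp only [List.map_cons, List.map_nil, List.prod_cons, List.prod_nil, mul_one]
    rw [LinearMap.sub_apply, LinearMap.smul_apply, Module.End.mul_apply, Module.End.one_apply,
      MD M D v hM hD, ← sub_smul, map_smul, ih, smul_smul, mul_comm]

theorem qb_act (hM : ∀ p, M (v p) = v (p + 1))
    (hD : ∀ p, D (v p) = (p : ℂ) • v (p - 1)) (N r α p : ℕ) (hα : α ≤ r) :
    qb M D N r α (v p) = ((∏ z ∈ Finset.range α, ((p : ℂ) - z)) *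
      ∏ z ∈ Finset.Ico (N + α + 1) (N + r + 1), ((p : ℂ) - z)) • v (p - α) := by
  rw [qb, Module.End.mul_apply, D_pow' D v hD, map_smul, list_act M D v hM hD, smul_smul]
  rcases le_or_gt α p with h | h
  · congr 2
    rw [Finset.prod_Ico_eq_prod_range]
    refine Finset.prod_congr (by congr 1; omega) fun t _ => ?_
    rw [Nat.cast_sub h]; push_cast; ring
  · rw [Finset.prod_eq_zero (Finset.mem_range.2 h) (by simp)]; simp

end

theorem raise (N r : ℕ) (s : ℤ) (hs : (ZZ N (N + r) s).card ≤ N) :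
    ∃ α ≤ r, ∃ b : Bool, ∀ (M D : Module.End ℂ R2) (v : ℕ → R2)
      (_ : ∀ p, M (v p) = v (p + 1)) (_ : ∀ p, D (v p) = (p : ℂ) • v (p - 1)) (p : ℕ),
      (RL M D (N + r) b (ZZ N (N + r) s).card * M ^ α) (v p) =
        phi N (N + r) s p • v ((p : ℤ) + s).toNat := by
  obtain ⟨p0, hp0, hs1, hs2⟩ : ∃ p0 ≤ N, 0 ≤ (p0 : ℤ) + s ∧ (p0 : ℤ) + s ≤ (N + r : ℕ) := by
    by_contra hcon
    push Not at hcon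
    have : ZZ N (N + r) s = Finset.range (N + 1) := by
      refine Finset.filter_true_of_mem fun p hp => ?_
      have h1 := Finset.mem_range.1 hp
      have h2 := hcon p (by omega)
      push_cast at h2 ⊢
      omega
    rw [this, Finset.card_range] at hs
    omega
  push_cast at hs2
  rcases lt_or_ge s 0 with h | h
  · have hZ : ZZ N (N + r) s = Finset.range (-s).toNat := by
      ext p; simp only [ZZ, Finset.mem_filter, Finset.mem_range]; push_cast; omega
    refine ⟨0, by omega, false, fun M D v hM hD p => ?_⟩
    rw [phi, hZ, Finset.card_range, pow_zero, mul_one, RL]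
    simp only [Bool.false_eq_true, if_false]
    rw [D_pow' D v hD]
    congr 2; omega
  rcases le_or_gt s r with h' | h'
  · have hZ : ZZ N (N + r) s = ∅ := by
      ext p
      simp only [ZZ, Finset.mem_filter, Finset.mem_range, Finset.notMem_empty, iff_false]
      push_cast; omega
    refine ⟨s.toNat, by omega, false, fun M D v hM hD p => ?_⟩
    rw [phi, hZ, Finset.card_empty, RL]
    simp only [Bool.false_eq_true, if_false, pow_zero, one_mul, Finset.prod_empty, one_smul]
    rw [M_pow M v hM]
    congr 1; omega
  · obtain ⟨e, rfl⟩ : ∃ e : ℕ, s = r + e := ⟨(s - r).toNat, by omega⟩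
    have hZ : ZZ N (N + r) (r + e) = Finset.Ico (N + 1 - e) (N + 1) := by
      ext p; simp only [ZZ, Finset.mem_filter, Finset.mem_range, Finset.mem_Ico]
      push_cast; omega
    refine ⟨r, le_rfl, true, fun M D v hM hD p => ?_⟩
    rw [phi, hZ, Nat.card_Ico, RL, if_pos rfl, Module.End.mul_apply, M_pow M v hM,
      show N + 1 - (N + 1 - e) = e by omega, Jp_pow M D v hM hD _ _ _ (by omega)]
    rw [show N + r + 1 - e = (N + 1 - e) + r by omega, show N + r + 1 = (N + 1) + r by omega,
      ← Finset.prod_Ico_add']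
    congr 1
    · refine Finset.prod_congr rfl fun z _ => ?_
      push_cast; ring
    · congr 1; omega

theorem lower (N r : ℕ) (s : ℤ) (hs : (ZZ (N + r) N s).card ≤ N + r) :
    ∃ α ≤ r, ∃ b : Bool, ∃ e, e + r = (ZZ (N + r) N s).card ∧
      ∀ (M D : Module.End ℂ R2) (v : ℕ → R2)
      (_ : ∀ p, M (v p) = v (p + 1)) (_ : ∀ p, D (v p) = (p : ℂ) • v (p - 1)) (p : ℕ),
      (RL M D N b e * qb M D N r α) (v p) =
        phi (N + r) N s p • v ((p : ℤ) + s).toNat := by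
  obtain ⟨p0, hp0, hs1, hs2⟩ : ∃ p0 ≤ N + r, 0 ≤ (p0 : ℤ) + s ∧ (p0 : ℤ) + s ≤ (N : ℕ) := by
    by_contra hcon
    push Not at hcon
    have : ZZ (N + r) N s = Finset.range (N + r + 1) := by
      refine Finset.filter_true_of_mem fun p hp => ?_
      have h1 := Finset.mem_range.1 hp
      have h2 := hcon p (by omega)
      omega
    rw [this, Finset.card_range] at hs
    omega
  rcases lt_or_ge s (-r) with h | h
  · obtain ⟨e, rfl⟩ : ∃ e : ℕ, s = -(r + e) := ⟨(-s - r).toNat, by omega⟩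
    have hZ : ZZ (N + r) N (-(r + e)) = Finset.range (e + r) := by
      ext p; simp only [ZZ, Finset.mem_filter, Finset.mem_range]; omega
    refine ⟨r, le_rfl, false, e, by rw [hZ, Finset.card_range], fun M D v hM hD p => ?_⟩
    rw [phi, hZ, RL, qb]
    simp only [Bool.false_eq_true, if_false, Nat.sub_self, List.range_zero, List.map_nil,
      List.prod_nil, one_mul]
    rw [← pow_add, D_pow' D v hD]
    congr 2; omega
  rcases le_or_gt s 0 with h' | h'
  · obtain ⟨α, rfl⟩ : ∃ α : ℕ, s = -α := ⟨(-s).toNat, by omega⟩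
    have hZ : ZZ (N + r) N (-α) = Finset.range α ∪ Finset.Ico (N + α + 1) (N + r + 1) := by
      ext p
      simp only [ZZ, Finset.mem_filter, Finset.mem_range, Finset.mem_union, Finset.mem_Ico]
      omega
    have hdis : Disjoint (Finset.range α) (Finset.Ico (N + α + 1) (N + r + 1)) := by
      rw [Finset.disjoint_left]
      intro p
      simp only [Finset.mem_range, Finset.mem_Ico]; omega
    refine ⟨α, by omega, false, 0, ?_, fun M D v hM hD p => ?_⟩
    · rw [hZ, Finset.card_union_of_disjoint hdis, Finset.card_range, Nat.card_Ico]; omega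
    rw [phi, hZ, Finset.prod_union hdis, RL]
    simp only [Bool.false_eq_true, if_false, pow_zero, one_mul]
    rw [qb_act M D v hM hD _ _ _ _ (by omega)]
    congr 2; omega
  · obtain ⟨e, rfl⟩ : ∃ e : ℕ, s = e := ⟨s.toNat, by omega⟩
    have hZ : ZZ (N + r) N e = Finset.Ico (N + 1 - e) (N + 1) ∪
        Finset.Ico (N + 0 + 1) (N + r + 1) := by
      ext p; simp only [ZZ, Finset.mem_filter, Finset.mem_range, Finset.mem_Ico, Finset.mem_union]
      omega
    have hdis : Disjoint (Finset.Ico (N + 1 - e) (N + 1))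
        (Finset.Ico (N + 0 + 1) (N + r + 1)) := by
      rw [Finset.disjoint_left]
      intro p
      simp only [Finset.mem_Ico]; omega
    refine ⟨0, by omega, true, e, ?_, fun M D v hM hD p => ?_⟩
    · rw [hZ, Finset.card_union_of_disjoint hdis, Nat.card_Ico, Nat.card_Ico]; omega
    rw [phi, hZ, Finset.prod_union hdis, RL, if_pos rfl, Module.End.mul_apply,
      qb_act M D v hM hD _ _ _ _ (by omega), map_smul, Nat.sub_zero,
      Jp_pow M D v hM hD _ _ _ (by omega), smul_smul, Finset.prod_range_zero, one_mul, mul_comm]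
    congr 2

/-! ### The order filtration -/

/-- Differential operators of order at most `k`. -/
def DO (k : ℕ) : Submodule ℂ (Module.End ℂ R2) :=
  Submodule.span ℂ {A | ∃ f i j, i + j ≤ k ∧ A = Mf f * Dx ^ i * Dy ^ j}

theorem Mf_add (f g : R2) : Mf (f + g) = Mf f + Mf g := by
  refine LinearMap.ext fun x => ?_
  simp [Mf, add_mul]

theorem Mf_smul (a : ℂ) (f : R2) : Mf (a • f) = a • Mf f := by
  refine LinearMap.ext fun x => ?_
  simp [Mf]

theorem Mf_mul (f g : R2) : Mf (f * g) = Mf f * Mf g := by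
  refine LinearMap.ext fun x => ?_
  simp [Mf]

theorem Mf_pow (f : R2) (e : ℕ) : Mf (f ^ e) = Mf f ^ e := by
  simp [Mf, LinearMap.pow_mulLeft]

theorem Mf_one : Mf 1 = 1 := by
  refine LinearMap.ext fun x => ?_
  simp [Mf]

theorem Mf_zero : Mf 0 = 0 := by
  refine LinearMap.ext fun x => ?_
  simp [Mf]

theorem isDiffOp_of_mem {A : Module.End ℂ R2} {k : ℕ} (h : A ∈ DO k) : IsDiffOpLE A k := by
  unfold DO at h
  induction h using Submodule.span_induction with
  | mem A h =>
    obtain ⟨f, i, j, hij, rfl⟩ := h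
    refine ⟨Pi.single (i, j) f, ?_⟩
    rw [diffOp, Finset.sum_eq_single (i, j)]
    · simp
    · intro b _ hb; simp [Pi.single_eq_of_ne hb, Mf_zero]
    · intro hn; exfalso; apply hn
      simp only [ordIdx, Finset.mem_filter, Finset.mem_product, Finset.mem_range]; omega
  | zero => exact ⟨0, by simp [diffOp, Mf_zero]⟩
  | add A B _ _ h h' =>
    obtain ⟨f, rfl⟩ := h
    obtain ⟨g, rfl⟩ := h'
    exact ⟨f + g, by simp [diffOp, Mf_add, add_mul, Finset.sum_add_distrib]⟩
  | smul a A _ h =>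
    obtain ⟨f, rfl⟩ := h
    exact ⟨a • f, by simp [diffOp, Mf_smul, Finset.smul_sum]⟩

theorem mem_of_isDiffOp {A : Module.End ℂ R2} {k : ℕ} (h : IsDiffOpLE A k) : A ∈ DO k := by
  obtain ⟨f, rfl⟩ := h
  refine Submodule.sum_mem _ fun ij hij => Submodule.subset_span ⟨f ij, ij.1, ij.2, ?_, rfl⟩
  simp only [ordIdx, Finset.mem_filter] at hij
  exact hij.2

theorem DO_mono : Monotone DO := by
  intro a b hab
  refine Submodule.span_mono ?_
  rintro _ ⟨f, i, j, h, rfl⟩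
  exact ⟨f, i, j, by omega, rfl⟩

theorem comm_DxDy : Commute Dx Dy := by
  apply ext_mon; intro p q
  simp only [Module.End.mul_apply, Dx_mon, Dy_mon, map_smul, smul_smul, mul_comm]

theorem comm_MxMy : Commute (Mf Xv) (Mf Yv) := by
  apply ext_mon; intro p q
  simp only [Module.End.mul_apply, Mx_mon, My_mon]

theorem comm_MxDy : Commute (Mf Xv) Dy := by
  apply ext_mon; intro p q
  simp only [Module.End.mul_apply, Mx_mon, Dy_mon, map_smul]

theorem comm_DxMy : Commute Dx (Mf Yv) := by
  apply ext_mon; intro p q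
  simp only [Module.End.mul_apply, Dx_mon, My_mon, map_smul]

theorem Dx_Mf (f : R2) : Dx * Mf f = Mf f * Dx + Mf (Dx f) := by
  refine LinearMap.ext fun x => ?_
  simp only [Module.End.mul_apply, LinearMap.add_apply, Mf, LinearMap.mulLeft_apply, Dx,
    Derivation.coeFn_coe, Derivation.leibniz, smul_eq_mul]
  ring

theorem Dy_Mf (f : R2) : Dy * Mf f = Mf f * Dy + Mf (Dy f) := by
  refine LinearMap.ext fun x => ?_
  simp only [Module.End.mul_apply, LinearMap.add_apply, Mf, LinearMap.mulLeft_apply, Dy,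
    Derivation.coeFn_coe, Derivation.leibniz, smul_eq_mul]
  ring

theorem Mf_DO (f : R2) (k : ℕ) (B : Module.End ℂ R2) (hB : B ∈ DO k) : Mf f * B ∈ DO k := by
  refine span_map_le (LinearMap.mulLeft ℂ (Mf f)) _ _ ?_ B hB
  rintro _ ⟨g, i, j, h, rfl⟩
  refine Submodule.subset_span ⟨f * g, i, j, h, ?_⟩
  rw [LinearMap.mulLeft_apply, Mf_mul]; simp only [mul_assoc]

theorem Dx_DO (k : ℕ) (B : Module.End ℂ R2) (hB : B ∈ DO k) : Dx * B ∈ DO (k + 1) := by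
  refine span_map_le (LinearMap.mulLeft ℂ Dx) _ _ ?_ B hB
  rintro _ ⟨g, i, j, h, rfl⟩
  have e : LinearMap.mulLeft ℂ Dx (Mf g * Dx ^ i * Dy ^ j) =
      Mf g * Dx ^ (i + 1) * Dy ^ j + Mf (Dx g) * Dx ^ i * Dy ^ j := by
    rw [LinearMap.mulLeft_apply, ← mul_assoc, ← mul_assoc, Dx_Mf, pow_succ']
    simp only [add_mul, mul_assoc]
  rw [e]
  exact Submodule.add_mem _ (Submodule.subset_span ⟨g, i + 1, j, by omega, rfl⟩)
    (Submodule.subset_span ⟨Dx g, i, j, by omega, rfl⟩)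

theorem Dy_DO (k : ℕ) (B : Module.End ℂ R2) (hB : B ∈ DO k) : Dy * B ∈ DO (k + 1) := by
  refine span_map_le (LinearMap.mulLeft ℂ Dy) _ _ ?_ B hB
  rintro _ ⟨g, i, j, h, rfl⟩
  have e : LinearMap.mulLeft ℂ Dy (Mf g * Dx ^ i * Dy ^ j) =
      Mf g * Dx ^ i * Dy ^ (j + 1) + Mf (Dy g) * Dx ^ i * Dy ^ j := by
    have hc : Dy * Dx ^ i = Dx ^ i * Dy := ((comm_DxDy.pow_left i).eq).symm
    rw [LinearMap.mulLeft_apply, ← mul_assoc, ← mul_assoc, Dy_Mf, pow_succ', add_mul, add_mul,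
      mul_assoc (Mf g) Dy, hc]
    simp only [mul_assoc]
  rw [e]
  exact Submodule.add_mem _ (Submodule.subset_span ⟨g, i, j + 1, by omega, rfl⟩)
    (Submodule.subset_span ⟨Dy g, i, j, by omega, rfl⟩)

theorem DO_mul {a b : ℕ} {A B : Module.End ℂ R2} (hA : A ∈ DO a) (hB : B ∈ DO b) :
    A * B ∈ DO (a + b) := by
  refine span_map_le (LinearMap.mulRight ℂ B) _ _ ?_ A hA
  rintro _ ⟨f, i, j, h, rfl⟩
  rw [LinearMap.mulRight_apply, mul_assoc, mul_assoc]
  apply Mf_DO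
  have h1 : ∀ j, Dy ^ j * B ∈ DO (j + b) := by
    intro j
    induction j with
    | zero => simpa using hB
    | succ j ih =>
      rw [pow_succ', mul_assoc]
      have := Dy_DO _ _ ih
      rwa [show j + 1 + b = j + b + 1 by omega]
  have h2 : ∀ i, Dx ^ i * (Dy ^ j * B) ∈ DO (i + (j + b)) := by
    intro i
    induction i with
    | zero => simpa using h1 j
    | succ i ih =>
      rw [pow_succ', mul_assoc]
      have := Dx_DO _ _ ih
      rwa [show i + 1 + (j + b) = i + (j + b) + 1 by omega]
  exact DO_mono (by omega) (h2 i)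

theorem Mf_mem (f : R2) : Mf f ∈ DO 0 := Submodule.subset_span ⟨f, 0, 0, by omega, by simp⟩
theorem one_mem_DO : (1 : Module.End ℂ R2) ∈ DO 0 := by rw [← Mf_one]; exact Mf_mem 1
theorem Dx_mem : Dx ∈ DO 1 := Submodule.subset_span ⟨1, 1, 0, by omega, by simp [Mf_one]⟩
theorem Dy_mem : Dy ∈ DO 1 := Submodule.subset_span ⟨1, 0, 1, by omega, by simp [Mf_one]⟩

theorem pow_mem_DO {A : Module.End ℂ R2} (hA : A ∈ DO 1) (e : ℕ) : A ^ e ∈ DO e := by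
  induction e with
  | zero => simpa using one_mem_DO
  | succ e ih => rw [pow_succ]; exact DO_mul ih hA

theorem lin_mem_DO {M D : Module.End ℂ R2} (hM : M ∈ DO 0) (hD : D ∈ DO 1) (a : ℂ)
    {C : Module.End ℂ R2} (hC : C ∈ DO 0) : M * D - a • C ∈ DO 1 :=
  Submodule.sub_mem _ (by simpa using DO_mul hM hD)
    (Submodule.smul_mem _ _ (DO_mono (by omega) hC))

theorem qb_mem_DO {M D : Module.End ℂ R2} (hM : M ∈ DO 0) (hD : D ∈ DO 1) (N r α : ℕ)
    (hα : α ≤ r) : qb M D N r α ∈ DO r := by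
  have h : ∀ s, ((List.range s).map (fun t => M * D - ((N + (t + 1) : ℕ) : ℂ) • 1)).prod
      ∈ DO s := by
    intro s
    induction s with
    | zero => simpa using one_mem_DO
    | succ s ih =>
      rw [List.range_succ, List.map_append, List.prod_append]
      refine DO_mul ih ?_
      simp only [List.map_cons, List.map_nil, List.prod_cons, List.prod_nil, mul_one]
      exact lin_mem_DO hM hD _ one_mem_DO
  have := DO_mul (h (r - α)) (pow_mem_DO hD α)
  rwa [show r - α + α = r by omega] at this

/-! ### Matrix operators -/

theorem matOp_apply (A B C D : Module.End ℂ R2) (w : V2) :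
    matOp A B C D w = (A w.1 + B w.2, C w.1 + D w.2) := rfl

theorem matOp_mul (A B C D A' B' C' D' : Module.End ℂ R2) :
    matOp A B C D * matOp A' B' C' D' =
      matOp (A * A' + B * C') (A * B' + B * D') (C * A' + D * C') (C * B' + D * D') := by
  refine LinearMap.ext fun w => ?_
  simp only [Module.End.mul_apply, matOp_apply, LinearMap.add_apply, map_add]
  refine Prod.ext ?_ ?_
  · change _ + _ + (_ + _) = _ + _ + (_ + _)
    abel
  · change _ + _ + (_ + _) = _ + _ + (_ + _)
    abel

theorem isMat_of {A B C D : Module.End ℂ R2} {k : ℕ} (hA : A ∈ DO k) (hB : B ∈ DO k)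
    (hC : C ∈ DO k) (hD : D ∈ DO k) : IsMatDiffOpLE (matOp A B C D) k :=
  ⟨A, B, C, D, isDiffOp_of_mem hA, isDiffOp_of_mem hB, isDiffOp_of_mem hC, isDiffOp_of_mem hD, rfl⟩

theorem isMat_mul {P Q : Module.End ℂ V2} {a b : ℕ} (hP : IsMatDiffOpLE P a)
    (hQ : IsMatDiffOpLE Q b) : IsMatDiffOpLE (P * Q) (a + b) := by
  obtain ⟨A, B, C, D, hA, hB, hC, hD, rfl⟩ := hP
  obtain ⟨A', B', C', D', hA', hB', hC', hD', rfl⟩ := hQ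
  rw [matOp_mul]
  replace hA := mem_of_isDiffOp hA
  replace hB := mem_of_isDiffOp hB
  replace hC := mem_of_isDiffOp hC
  replace hD := mem_of_isDiffOp hD
  replace hA' := mem_of_isDiffOp hA'
  replace hB' := mem_of_isDiffOp hB'
  replace hC' := mem_of_isDiffOp hC'
  replace hD' := mem_of_isDiffOp hD'
  exact isMat_of (Submodule.add_mem _ (DO_mul hA hA') (DO_mul hB hC'))
    (Submodule.add_mem _ (DO_mul hA hB') (DO_mul hB hD'))
    (Submodule.add_mem _ (DO_mul hC hA') (DO_mul hD hC'))
    (Submodule.add_mem _ (DO_mul hC hB') (DO_mul hD hD'))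

theorem isMat_mono {P : Module.End ℂ V2} {a b : ℕ} (hab : a ≤ b) (hP : IsMatDiffOpLE P a) :
    IsMatDiffOpLE P b := by
  obtain ⟨A, B, C, D, hA, hB, hC, hD, rfl⟩ := hP
  exact isMat_of (DO_mono hab (mem_of_isDiffOp hA)) (DO_mono hab (mem_of_isDiffOp hB))
    (DO_mono hab (mem_of_isDiffOp hC)) (DO_mono hab (mem_of_isDiffOp hD))

/-- The filtered span of compositions. -/
def FF (G : Set (Module.End ℂ V2)) (k : ℕ) : Submodule ℂ (Module.End ℂ V2) :=
  Submodule.span ℂ (matProdsOrd k G)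

theorem FF_mono (G : Set (Module.End ℂ V2)) : Monotone (FF G) := by
  intro a b hab
  refine Submodule.span_mono ?_
  rintro _ ⟨l, hl, rfl, h⟩
  exact ⟨l, hl, rfl, isMat_mono hab h⟩

theorem FF_mul {G : Set (Module.End ℂ V2)} {a b : ℕ} {P Q : Module.End ℂ V2} (hP : P ∈ FF G a)
    (hQ : Q ∈ FF G b) : P * Q ∈ FF G (a + b) := by
  have h := Submodule.mul_mem_mul hP hQ
  rw [FF, FF, Submodule.span_mul_span] at h
  refine Submodule.span_mono ?_ h
  rintro _ ⟨_, ⟨l, hl, rfl, h⟩, _, ⟨l', hl', rfl, h'⟩, rfl⟩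
  refine ⟨l ++ l', ?_, List.prod_append, isMat_mul h h'⟩
  intro x hx
  rcases List.mem_append.1 hx with hx | hx
  · exact hl x hx
  · exact hl' x hx

theorem FF_gen {G : Set (Module.End ℂ V2)} {a : ℕ} {P : Module.End ℂ V2} (hP : P ∈ G)
    (h : IsMatDiffOpLE P a) : P ∈ FF G a :=
  Submodule.subset_span ⟨[P], by simpa using hP, by simp, h⟩

/-- Injection of a component. -/
def inj (a : Fin 2) : R2 →ₗ[ℂ] V2 :=
  if a = 0 then LinearMap.inl ℂ R2 R2 else LinearMap.inr ℂ R2 R2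

/-- Projection to a component. -/
def prj (a : Fin 2) : V2 →ₗ[ℂ] R2 :=
  if a = 0 then LinearMap.fst ℂ R2 R2 else LinearMap.snd ℂ R2 R2

theorem prj_inj (a : Fin 2) (x : R2) : prj a (inj a x) = x := by
  fin_cases a <;> simp [prj, inj]

/-- Matrix unit embedding. -/
def eps (a b : Fin 2) : Module.End ℂ R2 →ₗ[ℂ] Module.End ℂ V2 where
  toFun A := inj a ∘ₗ A ∘ₗ prj b
  map_add' A B := by refine LinearMap.ext fun w => ?_; simp
  map_smul' r A := by refine LinearMap.ext fun w => ?_; simp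

theorem eps_mul (a b c : Fin 2) (A B : Module.End ℂ R2) :
    eps a b A * eps b c B = eps a c (A * B) := by
  refine LinearMap.ext fun w => ?_
  simp [eps, prj_inj]

theorem matOp_eq (A B C D : Module.End ℂ R2) :
    matOp A B C D = eps 0 0 A + eps 0 1 B + eps 1 0 C + eps 1 1 D := by
  refine LinearMap.ext fun w => ?_
  simp [matOp, eps, inj, prj]

theorem eps_dg0 (A B : Module.End ℂ R2) : eps 0 0 1 * dg A B = eps 0 0 A := by
  refine LinearMap.ext fun w => ?_
  simp [dg, matOp, eps, inj, prj]

theorem eps_dg1 (A B : Module.End ℂ R2) : eps 1 1 1 * dg A B = eps 1 1 B := by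
  refine LinearMap.ext fun w => ?_
  simp [dg, matOp, eps, inj, prj]

/-- Scalar operators whose embedding at `(a,b)` lies in the filtered span. -/
def HH (G : Set (Module.End ℂ V2)) (a b : Fin 2) (k : ℕ) : Submodule ℂ (Module.End ℂ R2) :=
  (FF G k).comap (eps a b)

theorem HH_mono (G : Set (Module.End ℂ V2)) (a b : Fin 2) : Monotone (HH G a b) :=
  fun _ _ h => Submodule.comap_mono (FF_mono G h)

theorem HH_mul {G : Set (Module.End ℂ V2)} {a b c : Fin 2} {k l : ℕ} {A B : Module.End ℂ R2}
    (hA : A ∈ HH G a b k) (hB : B ∈ HH G b c l) : A * B ∈ HH G a c (k + l) := by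
  have := FF_mul (show eps a b A ∈ FF G k from hA) (show eps b c B ∈ FF G l from hB)
  rw [eps_mul] at this
  exact this

theorem HH_pow {G : Set (Module.End ℂ V2)} {a : Fin 2} {A : Module.End ℂ R2}
    (h1 : 1 ∈ HH G a a 0) (hA : A ∈ HH G a a 1) (e : ℕ) : A ^ e ∈ HH G a a e := by
  induction e with
  | zero => simpa using h1
  | succ e ih => rw [pow_succ]; exact HH_mul ih hA

theorem Jxp_eq (a : ℕ) : Jxp a = Jp (Mf Xv) Dx a := by rw [Jxp, Jp, Mf_pow]
theorem Kyp_eq (a : ℕ) : Kyp a = Jp (Mf Yv) Dy a := by rw [Kyp, Jp, Mf_pow]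

/-- The diagonal facts needed at component `a` with degrees `(N, M)`. -/
structure Diag (G : Set (Module.End ℂ V2)) (a : Fin 2) (N M : ℕ) : Prop where
  one : 1 ∈ HH G a a 0
  dx : Dx ∈ HH G a a 1
  dy : Dy ∈ HH G a a 1
  xdx : Mf Xv * Dx ∈ HH G a a 1
  ydy : Mf Yv * Dy ∈ HH G a a 1
  jp : Jp (Mf Xv) Dx N ∈ HH G a a 1
  kp : Jp (Mf Yv) Dy M ∈ HH G a a 1

theorem gen_isMat1 {A B : Module.End ℂ R2} {k : ℕ} (hA : A ∈ DO k) (hB : B ∈ DO k) :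
    IsMatDiffOpLE (dg A B) k :=
  isMat_of hA (Submodule.zero_mem _) (Submodule.zero_mem _) hB

theorem Jp_mem_DO {M D : Module.End ℂ R2} (hM : M ∈ DO 0) (hD : D ∈ DO 1) (a : ℕ) :
    Jp M D a ∈ DO 1 := by
  refine lin_mem_DO ?_ hD _ hM
  have := DO_mul hM hM
  rw [pow_two]
  rwa [Nat.add_zero] at this

section gens
variable (n m Δ Γ : ℕ)

theorem Qgm_mem (α β : ℕ) (hα : α ≤ Δ) (hβ : β ≤ Γ) :
    Mf Xv ^ α * qb (Mf Yv) Dy (m - Γ) Γ β ∈ HH (Grect n m Δ Γ) 1 0 Γ := by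
  have e : eps 1 0 (Mf Xv ^ α * qb (Mf Yv) Dy (m - Γ) Γ β) = Qgm m Γ α β := by
    rw [Qgm, matOp_eq, Mf_pow, map_zero, map_zero, map_zero, zero_add, zero_add, add_zero]
    rfl
  change eps 1 0 (Mf Xv ^ α * qb (Mf Yv) Dy (m - Γ) Γ β) ∈ FF (Grect n m Δ Γ) Γ
  rw [e]
  refine FF_gen (Or.inl (Or.inl (Or.inr ⟨α, hα, β, hβ, rfl⟩))) ?_
  refine isMat_of (Submodule.zero_mem _) (Submodule.zero_mem _) ?_ (Submodule.zero_mem _)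
  exact Mf_DO _ _ _ (qb_mem_DO (Mf_mem _) Dy_mem _ _ _ hβ)

theorem Qgp_mem (α β : ℕ) (hα : α ≤ Δ) (hβ : β ≤ Γ) :
    qb (Mf Xv) Dx (n - Δ) Δ α * Mf Yv ^ β ∈ HH (Grect n m Δ Γ) 0 1 Δ := by
  have e : eps 0 1 (qb (Mf Xv) Dx (n - Δ) Δ α * Mf Yv ^ β) = Qgp n Δ α β := by
    rw [Qgp, matOp_eq, Mf_pow, map_zero, map_zero, map_zero, zero_add, add_zero, add_zero]
    rfl
  change eps 0 1 (qb (Mf Xv) Dx (n - Δ) Δ α * Mf Yv ^ β) ∈ FF (Grect n m Δ Γ) Δ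
  rw [e]
  refine FF_gen (Or.inl (Or.inr ⟨α, hα, β, hβ, rfl⟩)) ?_
  refine isMat_of (Submodule.zero_mem _) ?_ (Submodule.zero_mem _) (Submodule.zero_mem _)
  have := DO_mul (qb_mem_DO (Mf_mem Xv) Dx_mem (n - Δ) Δ α hα) (Mf_mem (Yv ^ β))
  rw [Nat.add_zero] at this
  exact this

theorem dg_one : dg 1 1 = 1 := by
  refine LinearMap.ext fun w => ?_
  simp [dg, matOp]

theorem one_FF : (1 : Module.End ℂ V2) ∈ FF (Grect n m Δ Γ) 0 :=
  FF_gen (Or.inr (Set.mem_singleton _)) (by rw [← dg_one]; exact gen_isMat1 one_mem_DO one_mem_DO)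

theorem proj_mem (G : Set (Module.End ℂ V2)) (h1 : 1 ∈ FF G 0) (a b : ℂ) (hab : a ≠ b)
    (h : dg (a • 1) (b • 1) ∈ FF G 0) : (1 ∈ HH G 0 0 0) ∧ (1 ∈ HH G 1 1 0) := by
  have hs : a - b ≠ 0 := sub_ne_zero.2 hab
  constructor
  · have e : eps 0 0 1 = (a - b)⁻¹ • (dg (a • 1) (b • 1) - b • 1) := by
      refine LinearMap.ext fun w => ?_
      refine Prod.ext ?_ ?_
      · simp [dg, matOp, eps, inj, prj, ← sub_smul, smul_smul, inv_mul_cancel₀ hs]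
      · simp [dg, matOp, eps, inj, prj]
    change eps 0 0 1 ∈ FF G 0
    rw [e]
    exact Submodule.smul_mem _ _ (Submodule.sub_mem _ h (Submodule.smul_mem _ _ h1))
  · have e : eps 1 1 1 = (a - b)⁻¹ • (a • 1 - dg (a • 1) (b • 1)) := by
      refine LinearMap.ext fun w => ?_
      refine Prod.ext ?_ ?_
      · simp [dg, matOp, eps, inj, prj]
      · simp [dg, matOp, eps, inj, prj, ← sub_smul, smul_smul, inv_mul_cancel₀ hs]
    change eps 1 1 1 ∈ FF G 0
    rw [e]
    exact Submodule.smul_mem _ _ (Submodule.sub_mem _ (Submodule.smul_mem _ _ h1) h)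

theorem projs : (1 ∈ HH (Grect n m Δ Γ) 0 0 0) ∧ (1 ∈ HH (Grect n m Δ Γ) 1 1 0) := by
  have h1 := one_FF n m Δ Γ
  have hs : ∀ a : ℂ, a • (1 : Module.End ℂ R2) ∈ DO 0 := fun a =>
    Submodule.smul_mem _ _ one_mem_DO
  by_cases hΔ : Δ = 0
  · by_cases hΓ : Γ = 0
    · subst hΔ hΓ
      have h2 := Qgm_mem n m 0 0 0 0 le_rfl le_rfl
      have h3 := Qgp_mem n m 0 0 0 0 le_rfl le_rfl
      simp only [qb, pow_zero, Nat.sub_self, List.range_zero, List.map_nil, List.prod_nil,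
        mul_one] at h2 h3
      exact ⟨by simpa using HH_mul h3 h2, by simpa using HH_mul h2 h3⟩
    · refine proj_mem _ h1 ((m : ℂ) / 2) (((m : ℂ) + Γ) / 2) ?_
        (FF_gen (P := Kgen m Γ) (by left; left; left; simp) (gen_isMat1 (hs _) (hs _)))
      intro h
      apply hΓ
      have : (Γ : ℂ) = 0 := by linear_combination (-2) * h
      exact_mod_cast this
  · refine proj_mem _ h1 (((n : ℂ) + Δ) / 2) ((n : ℂ) / 2) ?_
        (FF_gen (P := Jgen n Δ) (by left; left; left; simp) (gen_isMat1 (hs _) (hs _)))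
    intro h
    apply hΔ
    have : (Δ : ℂ) = 0 := by linear_combination 2 * h
    exact_mod_cast this

theorem diag0 : Diag (Grect n m Δ Γ) 0 (n - Δ) m := by
  have h1 := (projs n m Δ Γ).1
  have key : ∀ {A B : Module.End ℂ R2}, dg A B ∈ Grect n m Δ Γ → A ∈ DO 1 → B ∈ DO 1 →
      A ∈ HH (Grect n m Δ Γ) 0 0 1 := by
    intro A B h hA hB
    have := FF_mul (show eps 0 0 1 ∈ FF _ 0 from h1) (FF_gen h (gen_isMat1 hA hB))
    rw [eps_dg0, zero_add] at this
    exact this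
  have h1' : 1 ∈ HH (Grect n m Δ Γ) 0 0 1 := HH_mono _ _ _ (by omega) h1
  have Xm := Mf_mem Xv
  have Ym := Mf_mem Yv
  refine ⟨h1, ?_, ?_, ?_, ?_, ?_, ?_⟩
  · exact key (A := Dx) (B := Dx) (Or.inl (Or.inl (Or.inl (by simp [Sgm])))) Dx_mem Dx_mem
  · exact key (A := Dy) (B := Dy) (Or.inl (Or.inl (Or.inl (by simp [Tgm])))) Dy_mem Dy_mem
  · have := key (A := Jx0 (n - Δ)) (B := Jx0 n) (Or.inl (Or.inl (Or.inl (by simp [Sg0]))))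
      (lin_mem_DO Xm Dx_mem _ one_mem_DO) (lin_mem_DO Xm Dx_mem _ one_mem_DO)
    simpa [Jx0] using Submodule.add_mem _ this
      (Submodule.smul_mem _ (((n - Δ : ℕ) : ℂ) / 2) h1')
  · have := key (A := Ky0 m) (B := Ky0 (m - Γ)) (Or.inl (Or.inl (Or.inl (by simp [Tg0]))))
      (lin_mem_DO Ym Dy_mem _ one_mem_DO) (lin_mem_DO Ym Dy_mem _ one_mem_DO)
    simpa [Ky0] using Submodule.add_mem _ this (Submodule.smul_mem _ ((m : ℂ) / 2) h1')
  · refine key (B := Jp (Mf Xv) Dx n) (Or.inl (Or.inl (Or.inl ?_))) (Jp_mem_DO Xm Dx_mem _)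
      (Jp_mem_DO Xm Dx_mem _)
    simp [Sgp, Jxp_eq]
  · refine key (B := Jp (Mf Yv) Dy (m - Γ)) (Or.inl (Or.inl (Or.inl ?_))) (Jp_mem_DO Ym Dy_mem _)
      (Jp_mem_DO Ym Dy_mem _)
    simp [Tgp, Kyp_eq]

theorem diag1 : Diag (Grect n m Δ Γ) 1 n (m - Γ) := by
  have h1 := (projs n m Δ Γ).2
  have key : ∀ {A B : Module.End ℂ R2}, dg A B ∈ Grect n m Δ Γ → A ∈ DO 1 → B ∈ DO 1 →
      B ∈ HH (Grect n m Δ Γ) 1 1 1 := by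
    intro A B h hA hB
    have := FF_mul (show eps 1 1 1 ∈ FF _ 0 from h1) (FF_gen h (gen_isMat1 hA hB))
    rw [eps_dg1, zero_add] at this
    exact this
  have h1' : 1 ∈ HH (Grect n m Δ Γ) 1 1 1 := HH_mono _ _ _ (by omega) h1
  have Xm := Mf_mem Xv
  have Ym := Mf_mem Yv
  refine ⟨h1, ?_, ?_, ?_, ?_, ?_, ?_⟩
  · exact key (A := Dx) (B := Dx) (Or.inl (Or.inl (Or.inl (by simp [Sgm])))) Dx_mem Dx_mem
  · exact key (A := Dy) (B := Dy) (Or.inl (Or.inl (Or.inl (by simp [Tgm])))) Dy_mem Dy_mem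
  · have := key (A := Jx0 (n - Δ)) (B := Jx0 n) (Or.inl (Or.inl (Or.inl (by simp [Sg0]))))
      (lin_mem_DO Xm Dx_mem _ one_mem_DO) (lin_mem_DO Xm Dx_mem _ one_mem_DO)
    simpa [Jx0] using Submodule.add_mem _ this (Submodule.smul_mem _ ((n : ℂ) / 2) h1')
  · have := key (A := Ky0 m) (B := Ky0 (m - Γ)) (Or.inl (Or.inl (Or.inl (by simp [Tg0]))))
      (lin_mem_DO Ym Dy_mem _ one_mem_DO) (lin_mem_DO Ym Dy_mem _ one_mem_DO)
    simpa [Ky0] using Submodule.add_mem _ this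
      (Submodule.smul_mem _ (((m - Γ : ℕ) : ℂ) / 2) h1')
  · refine key (A := Jp (Mf Xv) Dx (n - Δ)) (Or.inl (Or.inl (Or.inl ?_)))
      (Jp_mem_DO Xm Dx_mem _) (Jp_mem_DO Xm Dx_mem _)
    simp [Sgp, Jxp_eq]
  · refine key (A := Jp (Mf Yv) Dy m) (Or.inl (Or.inl (Or.inl ?_))) (Jp_mem_DO Ym Dy_mem _)
      (Jp_mem_DO Ym Dy_mem _)
    simp [Tgp, Kyp_eq]

end gens

/-! ### Assembling the blocks -/

theorem comm_RL {A M D : Module.End ℂ R2} (h1 : Commute A M) (h2 : Commute A D) (a : ℕ)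
    (b : Bool) (e : ℕ) : Commute A (RL M D a b e) := by
  unfold RL
  split
  · refine Commute.pow_right ?_ e
    exact ((h1.pow_right 2).mul_right h2).sub_right (h1.smul_right _)
  · exact h2.pow_right e

theorem comm_qb {A M D : Module.End ℂ R2} (h1 : Commute A M) (h2 : Commute A D) (N r α : ℕ) :
    Commute A (qb M D N r α) := by
  refine Commute.mul_right ?_ (h2.pow_right α)
  refine Commute.list_prod_right _ _ fun x hx => ?_
  obtain ⟨t, _, rfl⟩ := List.mem_map.1 hx
  exact (h1.mul_right h2).sub_right ((Commute.one_right _).smul_right _)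

theorem xdx_pow (i p q : ℕ) : ((Mf Xv * Dx) ^ i) (mon p q) = (p : ℂ) ^ i • mon p q := by
  induction i with
  | zero => simp
  | succ i ih =>
    rw [pow_succ', Module.End.mul_apply, ih, map_smul, Module.End.mul_apply,
      MD (Mf Xv) Dx (fun p => mon p q) (fun p => Mx_mon p q) (fun p => Dx_mon p q), smul_smul,
      pow_succ]

theorem ydy_pow (i p q : ℕ) : ((Mf Yv * Dy) ^ i) (mon p q) = (q : ℂ) ^ i • mon p q := by
  induction i with
  | zero => simp
  | succ i ih =>
    rw [pow_succ', Module.End.mul_apply, ih, map_smul, Module.End.mul_apply,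
      MD (Mf Yv) Dy (fun q => mon p q) (fun q => My_mon p q) (fun q => Dy_mon p q), smul_smul,
      pow_succ]

theorem Sh_prod (A B : Module.End ℂ R2) (g h : ℕ → ℂ) (s t : ℤ) (i j : ℕ)
    (hA : ∀ p q, A (mon p q) = g p • mon ((p : ℤ) + s).toNat q)
    (hB : ∀ p q, B (mon p q) = h q • mon p ((q : ℤ) + t).toNat) :
    Sh s t (fun p q => (g p * (p : ℂ) ^ i) * (h q * (q : ℂ) ^ j)) =
      A * B * ((Mf Xv * Dx) ^ i * (Mf Yv * Dy) ^ j) := by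
  apply ext_mon; intro p q
  simp only [Sh_mon, Module.End.mul_apply, ydy_pow, xdx_pow, map_smul, hA, hB, smul_smul]
  congr 1; ring

theorem RLx_mem {G : Set (Module.End ℂ V2)} {a : Fin 2} {N M : ℕ} (h : Diag G a N M) (b : Bool)
    (e : ℕ) : RL (Mf Xv) Dx N b e ∈ HH G a a e := by
  unfold RL; split
  · exact HH_pow h.one h.jp e
  · exact HH_pow h.one h.dx e

theorem RLy_mem {G : Set (Module.End ℂ V2)} {a : Fin 2} {N M : ℕ} (h : Diag G a N M) (b : Bool)
    (e : ℕ) : RL (Mf Yv) Dy M b e ∈ HH G a a e := by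
  unfold RL; split
  · exact HH_pow h.one h.kp e
  · exact HH_pow h.one h.dy e

theorem block_fin {G : Set (Module.End ℂ V2)} {a b : Fin 2} {N M N' M' : ℕ} (ha : Diag G a N M)
    (hb : Diag G b N' M') (bx b' : Bool) (e e' r i j : ℕ) (Qx Qy : Module.End ℂ R2)
    (hc : Commute Qx (RL (Mf Yv) Dy M b' e')) (hQ : Qx * Qy ∈ HH G a b r) :
    (RL (Mf Xv) Dx N bx e * Qx) * (RL (Mf Yv) Dy M b' e' * Qy) *
      ((Mf Xv * Dx) ^ i * (Mf Yv * Dy) ^ j) ∈ HH G a b (e + e' + r + (i + j)) := by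
  have e1 : (RL (Mf Xv) Dx N bx e * Qx) * (RL (Mf Yv) Dy M b' e' * Qy) =
      RL (Mf Xv) Dx N bx e * RL (Mf Yv) Dy M b' e' * (Qx * Qy) := by
    rw [mul_assoc, ← mul_assoc Qx, hc.eq]; simp only [mul_assoc]
  rw [e1]
  exact HH_mul (HH_mul (HH_mul (RLx_mem ha bx e) (RLy_mem ha b' e')) hQ)
    (HH_mul (HH_pow hb.one hb.xdx i) (HH_pow hb.one hb.ydy j))

theorem block_diag {G : Set (Module.End ℂ V2)} {a : Fin 2} {N M k : ℕ} (ha : Diag G a N M)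
    (f : ℕ × ℕ → R2) (hf : ∀ ij : ℕ × ℕ, k < ij.1 + ij.2 → f ij = 0)
    (hpres : ∀ w ∈ Rmod N M, diffOp (rectIdx N M) f w ∈ Rmod N M) :
    diffOp (rectIdx N M) f ∈ HH G a a k := by
  refine scalar_main N M N M k f hf hpres _ (HH_mono _ _ _) fun s t hs ht i j => ?_
  obtain ⟨α, hα, b, hx⟩ := raise N 0 s hs
  obtain ⟨β, hβ, b', hy⟩ := raise M 0 t ht
  rw [Nat.add_zero] at hx hy
  rw [Sh_prod _ _ _ _ s t i j
    (fun p q => hx (Mf Xv) Dx (fun p => mon p q) (fun p => Mx_mon p q) (fun p => Dx_mon p q) p)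
    (fun p q => hy (Mf Yv) Dy (fun q => mon p q) (fun q => My_mon p q) (fun q => Dy_mon p q) q)]
  refine HH_mono _ _ _ (le_of_eq ?_) (block_fin (r := 0) ha ha b b' _ _ i j _ _ ?_ ?_)
  · omega
  · exact comm_RL (comm_MxMy.pow_left _) (comm_MxDy.pow_left _) _ _ _
  · obtain rfl : α = 0 := by omega
    obtain rfl : β = 0 := by omega
    simpa using ha.one

theorem block_10 {G : Set (Module.End ℂ V2)} {N M Δ Γ k : ℕ}
    (h0 : Diag G 0 N (M + Γ)) (h1 : Diag G 1 (N + Δ) M)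
    (hQ : ∀ α ≤ Δ, ∀ β ≤ Γ, Mf Xv ^ α * qb (Mf Yv) Dy M Γ β ∈ HH G 1 0 Γ)
    (f : ℕ × ℕ → R2) (hf : ∀ ij : ℕ × ℕ, k < ij.1 + ij.2 → f ij = 0)
    (hpres : ∀ w ∈ Rmod N (M + Γ), diffOp (rectIdx N (M + Γ)) f w ∈ Rmod (N + Δ) M) :
    diffOp (rectIdx N (M + Γ)) f ∈ HH G 1 0 k := by
  refine scalar_main N (M + Γ) (N + Δ) M k f hf hpres _ (HH_mono _ _ _) fun s t hs ht i j => ?_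
  obtain ⟨α, hα, b, hx⟩ := raise N Δ s hs
  obtain ⟨β, hβ, b', e, he, hy⟩ := lower M Γ t ht
  rw [Sh_prod _ _ _ _ s t i j
    (fun p q => hx (Mf Xv) Dx (fun p => mon p q) (fun p => Mx_mon p q) (fun p => Dx_mon p q) p)
    (fun p q => hy (Mf Yv) Dy (fun q => mon p q) (fun q => My_mon p q) (fun q => Dy_mon p q) q)]
  refine HH_mono _ _ _ (le_of_eq ?_) (block_fin h1 h0 b b' _ _ _ i j _ _ ?_ (hQ α hα β hβ))
  · omega
  · exact comm_RL (comm_MxMy.pow_left _) (comm_MxDy.pow_left _) _ _ _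

theorem block_01 {G : Set (Module.End ℂ V2)} {N M Δ Γ k : ℕ}
    (h0 : Diag G 0 N (M + Γ)) (h1 : Diag G 1 (N + Δ) M)
    (hQ : ∀ α ≤ Δ, ∀ β ≤ Γ, qb (Mf Xv) Dx N Δ α * Mf Yv ^ β ∈ HH G 0 1 Δ)
    (f : ℕ × ℕ → R2) (hf : ∀ ij : ℕ × ℕ, k < ij.1 + ij.2 → f ij = 0)
    (hpres : ∀ w ∈ Rmod (N + Δ) M, diffOp (rectIdx (N + Δ) M) f w ∈ Rmod N (M + Γ)) :
    diffOp (rectIdx (N + Δ) M) f ∈ HH G 0 1 k := by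
  refine scalar_main (N + Δ) M N (M + Γ) k f hf hpres _ (HH_mono _ _ _) fun s t hs ht i j => ?_
  obtain ⟨α, hα, b, e, he, hx⟩ := lower N Δ s hs
  obtain ⟨β, hβ, b', hy⟩ := raise M Γ t ht
  rw [Sh_prod _ _ _ _ s t i j
    (fun p q => hx (Mf Xv) Dx (fun p => mon p q) (fun p => Mx_mon p q) (fun p => Dx_mon p q) p)
    (fun p q => hy (Mf Yv) Dy (fun q => mon p q) (fun q => My_mon p q) (fun q => Dy_mon p q) q)]
  refine HH_mono _ _ _ (le_of_eq ?_) (block_fin h0 h1 b b' _ _ _ i j _ _ ?_ (hQ α hα β hβ))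
  · omega
  · refine comm_RL ?_ ?_ _ _ _
    · exact (comm_qb comm_MxMy.symm comm_DxMy.symm _ _ _).symm
    · exact (comm_qb comm_MxDy.symm comm_DxDy.symm _ _ _).symm

end S15

theorem stmt15 (n m Δ Γ k : ℕ) (hΔ : Δ ≤ n) (hΓ : Γ ≤ m)
    (f11 f12 f21 f22 : ℕ × ℕ → R2)
    (h11 : ∀ ij : ℕ × ℕ, k < ij.1 + ij.2 → f11 ij = 0)
    (h12 : ∀ ij : ℕ × ℕ, k < ij.1 + ij.2 → f12 ij = 0)
    (h21 : ∀ ij : ℕ × ℕ, k < ij.1 + ij.2 → f21 ij = 0)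
    (h22 : ∀ ij : ℕ × ℕ, k < ij.1 + ij.2 → f22 ij = 0)
    (T : Module.End ℂ V2)
    (hT : T = matOp (diffOp (rectIdx (n - Δ) m) f11) (diffOp (rectIdx n (m - Γ)) f12)
                    (diffOp (rectIdx (n - Δ) m) f21) (diffOp (rectIdx n (m - Γ)) f22))
    (hpres : ∀ w ∈ (Rmod (n - Δ) m).prod (Rmod n (m - Γ)),
      T w ∈ (Rmod (n - Δ) m).prod (Rmod n (m - Γ))) :
    T ∈ Submodule.span ℂ (matProdsOrd k (Grect n m Δ Γ)) := by
  have hd0 := S15.diag0 n m Δ Γ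
  have hd1 := S15.diag1 n m Δ Γ
  have hQm := S15.Qgm_mem n m Δ Γ
  have hQp := S15.Qgp_mem n m Δ Γ
  have hp0 : ∀ w ∈ Rmod (n - Δ) m,
      diffOp (rectIdx (n - Δ) m) f11 w ∈ Rmod (n - Δ) m ∧
      diffOp (rectIdx (n - Δ) m) f21 w ∈ Rmod n (m - Γ) := by
    intro w hw
    have h := hpres (w, 0) ⟨hw, Submodule.zero_mem _⟩
    rw [hT, S15.matOp_apply, Submodule.mem_prod] at h
    simpa using h
  have hp1 : ∀ w ∈ Rmod n (m - Γ),
      diffOp (rectIdx n (m - Γ)) f12 w ∈ Rmod (n - Δ) m ∧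
      diffOp (rectIdx n (m - Γ)) f22 w ∈ Rmod n (m - Γ) := by
    intro w hw
    have h := hpres (0, w) ⟨Submodule.zero_mem _, hw⟩
    rw [hT, S15.matOp_apply, Submodule.mem_prod] at h
    simpa using h
  clear hpres
  have hn : n = (n - Δ) + Δ := by omega
  have hm : m = (m - Γ) + Γ := by omega
  have hG : ∃ G, G = Grect n m Δ Γ := ⟨_, rfl⟩
  obtain ⟨G, hG⟩ := hG
  rw [← hG] at hd0 hd1 hQm hQp ⊢
  clear hG
  generalize n - Δ = N at *
  generalize m - Γ = M at *
  subst hn hm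
  rw [hT, S15.matOp_eq]
  refine Submodule.add_mem _ (Submodule.add_mem _ (Submodule.add_mem _ ?_ ?_) ?_) ?_
  · exact S15.block_diag hd0 f11 h11 fun w hw => (hp0 w hw).1
  · exact S15.block_01 hd0 hd1 (fun α hα β hβ => hQp α β hα hβ) f12 h12 fun w hw => (hp1 w hw).1
  · exact S15.block_10 hd0 hd1 (fun α hα β hβ => hQm α β hα hβ) f21 h21 fun w hw => (hp0 w hw).2
  · exact S15.block_diag hd1 f22 h22 fun w hw => (hp1 w hw).2
end
end

section
/- Let n, Δ, k ∈ ℕ with Δ ≤ k and k ≤ n − Δ. The ℂ-vector space of all matrix differential operators 𝐓 of order at most k which preserve 𝓣 = 𝒯_{n−Δ} × 𝒯ₙ has dimension d satisfying 2·d = (k+1)(k+2)(2k² + 6k + 4 + Δ²). -/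
noncomputable section

open MvPolynomial

/-- The exponent vector `(p,q)`. -/
def ee (p q : ℕ) : Fin 2 →₀ ℕ := Finsupp.single 0 p + Finsupp.single 1 q

lemma ee_zero (p q : ℕ) : ee p q 0 = p := by simp [ee]
lemma ee_one (p q : ℕ) : ee p q 1 = q := by simp [ee]
lemma ee_self (m : Fin 2 →₀ ℕ) : ee (m 0) (m 1) = m := by
  ext i; fin_cases i <;> simp [ee]
lemma ee_inj {p q p' q' : ℕ} : ee p q = ee p' q' ↔ p = p' ∧ q = q' := by
  constructor
  · intro h
    exact ⟨by rw [← ee_zero p q, h, ee_zero], by rw [← ee_one p q, h, ee_one]⟩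
  · rintro ⟨rfl, rfl⟩; rfl

/-- The monomial `x^p y^q`. -/
def mon (p q : ℕ) : R2 := Xv ^ p * Yv ^ q

lemma mon_eq (p q : ℕ) : mon p q = monomial (ee p q) 1 := by
  simp [mon, Xv, Yv, ee, X_pow_eq_monomial, monomial_mul]

lemma coeff_mon (p q p' q' : ℕ) :
    coeff (ee p' q') (mon p q) = if p = p' ∧ q = q' then 1 else 0 := by
  rw [mon_eq, coeff_monomial]
  simp only [ee_inj]

lemma end_ext {A B : Module.End ℂ R2} (h : ∀ p q, A (mon p q) = B (mon p q)) : A = B := by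
  apply (basisMonomials (Fin 2) ℂ).ext
  intro m
  have := h (m 0) (m 1)
  rw [mon_eq, ee_self] at this
  simpa using this

/-- Falling factorial. -/
def ff (z : ℂ) (j : ℕ) : ℂ := ∏ l ∈ Finset.range j, (z - l)

lemma ff_zero (z : ℂ) : ff z 0 = 1 := by simp [ff]
lemma ff_succ (z : ℂ) (j : ℕ) : ff z (j + 1) = ff z j * (z - j) := by
  simp [ff, Finset.prod_range_succ]
lemma ff_eq_zero {p j : ℕ} (h : p < j) : ff (p : ℂ) j = 0 := by
  rw [ff, Finset.prod_eq_zero_iff]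
  exact ⟨p, by simpa using h, by simp⟩
lemma ff_ne_zero {p j : ℕ} (h : j ≤ p) : ff (p : ℂ) j ≠ 0 := by
  rw [ff, Finset.prod_ne_zero_iff]
  intro l hl
  rw [Finset.mem_range] at hl
  rw [sub_ne_zero]
  exact_mod_cast (by omega : p ≠ l)

/-- Mixed operators, diagonal up to the shift `(s,t)`. -/
def FF (a : ℕ) (s t : ℤ) (i j r : ℕ) : Module.End ℂ R2 :=
  (basisMonomials (Fin 2) ℂ).constr ℂ fun m =>
    (ff (m 0 : ℂ) ((-s).toNat + i) * ff (m 1 : ℂ) ((-t).toNat + j) *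
      ff ((a : ℂ) - m 0 - m 1) r) • mon (m 0 + s).toNat (m 1 + t).toNat

lemma FF_mon (a : ℕ) (s t : ℤ) (i j r p q : ℕ) :
    FF a s t i j r (mon p q) = (ff (p : ℂ) ((-s).toNat + i) * ff (q : ℂ) ((-t).toNat + j) *
      ff ((a : ℂ) - p - q) r) • mon (p + s).toNat (q + t).toNat := by
  have : mon p q = basisMonomials (Fin 2) ℂ (ee p q) := by rw [mon_eq]; simp
  rw [this, FF, Module.Basis.constr_basis, ee_zero, ee_one]

lemma FF_rel (a : ℕ) (s t : ℤ) (i j r : ℕ) :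
    FF a s t (i + 1) j r + FF a s t i (j + 1) r + FF a s t i j (r + 1) =
      ((a : ℂ) - (-s).toNat - (-t).toNat - i - j - r) • FF a s t i j r := by
  apply end_ext
  intro p q
  simp only [LinearMap.add_apply, LinearMap.smul_apply, FF_mon, ← add_smul, smul_smul,
    ← add_assoc, ff_succ]
  congr 1
  push_cast
  ring

/-- `u + v` for a shift `(s,t)`. -/
def uv (s t : ℤ) : ℕ := (-s).toNat + (-t).toNat

/-- Span with no `r`. -/
def SpD (a k : ℕ) : Submodule ℂ (Module.End ℂ R2) :=
  Submodule.span ℂ {A | ∃ s t i j, uv s t + i + j ≤ k ∧ A = FF a s t i j 0}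

/-- Span with no `j`. -/
def SpE (a k : ℕ) : Submodule ℂ (Module.End ℂ R2) :=
  Submodule.span ℂ {A | ∃ s t i r, uv s t + i + r ≤ k ∧ A = FF a s t i 0 r}

lemma FF_mem_SpD (a k : ℕ) (s t : ℤ) (r : ℕ) : ∀ i j, uv s t + i + j + r ≤ k →
    FF a s t i j r ∈ SpD a k := by
  induction r with
  | zero => intro i j h; exact Submodule.subset_span ⟨s, t, i, j, h, rfl⟩
  | succ r ih =>
    intro i j h
    have := FF_rel a s t i j r
    have h2 := eq_sub_of_add_eq' this
    rw [h2]
    exact Submodule.sub_mem _ (Submodule.smul_mem _ _ (ih _ _ (by omega)))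
      (Submodule.add_mem _ (ih _ _ (by omega)) (ih _ _ (by omega)))

lemma FF_mem_SpE (a k : ℕ) (s t : ℤ) (j : ℕ) : ∀ i r, uv s t + i + j + r ≤ k →
    FF a s t i j r ∈ SpE a k := by
  induction j with
  | zero => intro i r h; exact Submodule.subset_span ⟨s, t, i, r, by omega, rfl⟩
  | succ j ih =>
    intro i r h
    have := FF_rel a s t i j r
    rw [add_right_comm] at this
    have h2 := eq_sub_of_add_eq' this
    rw [h2]
    exact Submodule.sub_mem _ (Submodule.smul_mem _ _ (ih _ _ (by omega)))
      (Submodule.add_mem _ (ih _ _ (by omega)) (ih _ _ (by omega)))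

lemma SpD_eq_SpE (a k : ℕ) : SpD a k = SpE a k := by
  apply le_antisymm
  · rw [SpD, Submodule.span_le]
    rintro _ ⟨s, t, i, j, h, rfl⟩
    exact FF_mem_SpE a k s t j i 0 (by omega)
  · rw [SpE, Submodule.span_le]
    rintro _ ⟨s, t, i, r, h, rfl⟩
    exact FF_mem_SpD a k s t r i 0 (by omega)

lemma Dx_mon (p q : ℕ) : Dx (mon p q) = (p : ℂ) • mon (p - 1) q := by
  have h0 : Dx (mon p q) = pderiv 0 (mon p q) := rfl
  rw [h0]
  simp only [mon, Xv, Yv,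
    Derivation.leibniz, Derivation.leibniz_pow, pderiv_X_self, smul_eq_mul]
  rw [pderiv_X_of_ne (by decide)]
  simp [Algebra.smul_def]
  ring

lemma Dy_mon (p q : ℕ) : Dy (mon p q) = (q : ℂ) • mon p (q - 1) := by
  have h0 : Dy (mon p q) = pderiv 1 (mon p q) := rfl
  rw [h0]
  simp only [mon, Xv, Yv,
    Derivation.leibniz, Derivation.leibniz_pow, pderiv_X_self, smul_eq_mul]
  rw [pderiv_X_of_ne (by decide)]
  simp [Algebra.smul_def]
  ring

lemma ff_mul_pred (p i : ℕ) : ff (p : ℂ) i * ((p - i : ℕ) : ℂ) = ff (p : ℂ) (i + 1) := by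
  rw [ff_succ]
  rcases le_or_gt i p with h | h
  · rw [Nat.cast_sub h]
  · rw [ff_eq_zero h]; simp

lemma Dx_pow_mon (i p q : ℕ) : (Dx ^ i) (mon p q) = ff (p : ℂ) i • mon (p - i) q := by
  induction i with
  | zero => simp [ff_zero]
  | succ i ih =>
    rw [pow_succ', Module.End.mul_apply, ih, map_smul, Dx_mon, smul_smul, ff_mul_pred]
    rfl

lemma Dy_pow_mon (i p q : ℕ) : (Dy ^ i) (mon p q) = ff (q : ℂ) i • mon p (q - i) := by
  induction i with
  | zero => simp [ff_zero]
  | succ i ih =>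
    rw [pow_succ', Module.End.mul_apply, ih, map_smul, Dy_mon, smul_smul, ff_mul_pred]
    rfl

lemma mon_mul (p q p' q' : ℕ) : mon p q * mon p' q' = mon (p + p') (q + q') := by
  simp only [mon]; ring

lemma FF_eq (a : ℕ) (s t : ℤ) (i j : ℕ) :
    FF a s t i j 0 = Mf (mon (s.toNat + i) (t.toNat + j)) * Dx ^ ((-s).toNat + i) *
      Dy ^ ((-t).toNat + j) := by
  apply end_ext
  intro p q
  rw [FF_mon, Module.End.mul_apply, Module.End.mul_apply, Dy_pow_mon, map_smul, Dx_pow_mon,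
    map_smul, map_smul, Mf, LinearMap.mulLeft_apply, mon_mul, smul_smul, ff_zero, mul_one,
    mul_comm (ff (q : ℂ) _)]
  rcases lt_or_ge p ((-s).toNat + i) with h | h
  · rw [ff_eq_zero h]; simp
  rcases lt_or_ge q ((-t).toNat + j) with h' | h'
  · rw [ff_eq_zero h']; simp
  congr 2 <;> omega

lemma Mf_add (f g : R2) : Mf (f + g) = Mf f + Mf g := by
  apply end_ext; intro p q; simp [Mf, add_mul]

lemma Mf_smul (c : ℂ) (f : R2) : Mf (c • f) = c • Mf f := by
  apply end_ext; intro p q; simp [Mf]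

/-- The submodule of operators of order at most `k`. -/
def DO (k : ℕ) : Submodule ℂ (Module.End ℂ R2) where
  carrier := {A | IsDiffOpLE A k}
  zero_mem' := ⟨0, by simp [diffOp, Mf]⟩
  add_mem' := by
    rintro _ _ ⟨f, rfl⟩ ⟨g, rfl⟩
    refine ⟨f + g, ?_⟩
    simp only [diffOp, ← Finset.sum_add_distrib]
    refine Finset.sum_congr rfl fun x _ => ?_
    rw [← add_mul, ← add_mul]
    congr 2
    exact (Mf_add _ _).symm
  smul_mem' := by
    rintro c _ ⟨f, rfl⟩
    refine ⟨c • f, ?_⟩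
    simp only [diffOp, Finset.smul_sum]
    refine Finset.sum_congr rfl fun x _ => ?_
    rw [← smul_mul_assoc, ← smul_mul_assoc]
    congr 2
    exact (Mf_smul _ _).symm

lemma mem_ordIdx (k i j : ℕ) : (i, j) ∈ ordIdx k ↔ i + j ≤ k := by
  simp [ordIdx]; omega

lemma term_mem_SpD (a k i j : ℕ) (h : i + j ≤ k) (f : R2) :
    Mf f * Dx ^ i * Dy ^ j ∈ SpD a k := by
  induction f using MvPolynomial.induction_on' with
  | monomial m c =>
    have h1 : Mf (monomial m c) = c • Mf (mon (m 0) (m 1)) := by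
      rw [← Mf_smul, mon_eq, ee_self, smul_monomial, smul_eq_mul, mul_one]
    rw [h1, smul_mul_assoc, smul_mul_assoc]
    refine Submodule.smul_mem _ _ ?_
    refine Submodule.subset_span ⟨(m 0 : ℤ) - i, (m 1 : ℤ) - j, min (m 0) i, min (m 1) j, ?_, ?_⟩
    · simp only [uv]; omega
    · rw [FF_eq]
      congr <;> omega
  | add p q hp hq =>
    rw [Mf_add, add_mul, add_mul]
    exact Submodule.add_mem _ hp hq

lemma DO_eq (a k : ℕ) : DO k = SpD a k := by
  apply le_antisymm
  · rintro _ ⟨f, rfl⟩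
    refine Submodule.sum_mem _ ?_
    rintro ⟨i, j⟩ hx
    exact term_mem_SpD a k i j ((mem_ordIdx _ _ _).1 hx) _
  · rw [SpD, Submodule.span_le]
    rintro _ ⟨s, t, i, j, h, rfl⟩
    rw [FF_eq]
    refine ⟨fun x => if x = ((-s).toNat + i, (-t).toNat + j) then
      mon (s.toNat + i) (t.toNat + j) else 0, ?_⟩
    rw [diffOp, Finset.sum_eq_single ((-s).toNat + i, (-t).toNat + j)]
    · simp
    · intro x _ hx
      simp [hx, Mf]
    · intro hx
      rw [mem_ordIdx] at hx
      simp only [uv] at h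
      omega

/-- Index type. -/
abbrev Q4 : Type := ℤ × ℤ × ℕ × ℕ

/-- The adapted operators. -/
def EE (a : ℕ) (x : Q4) : Module.End ℂ R2 := FF a x.1 x.2.1 x.2.2.1 0 x.2.2.2

/-- Indices of order at most `k`. -/
def Ik (k : ℕ) : Set Q4 := {x | uv x.1 x.2.1 + x.2.2.1 + x.2.2.2 ≤ k}

lemma SpE_eq (a k : ℕ) : SpE a k = Submodule.span ℂ (EE a '' Ik k) := by
  rw [SpE]
  congr 1
  ext A
  constructor
  · rintro ⟨s, t, i, r, h, rfl⟩
    exact ⟨(s, t, i, r), h, rfl⟩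
  · rintro ⟨⟨s, t, i, r⟩, h, rfl⟩
    exact ⟨s, t, i, r, h, rfl⟩

lemma ff_sub_cast {a p q r : ℕ} (h : p + q + r = a) : (a : ℂ) - p - q = (r : ℂ) := by
  subst h; push_cast; ring

lemma coeff_FF_ne (a : ℕ) (s t s' t' : ℤ) (i j r p q r0 : ℕ) (hp : 0 ≤ p + s) (hq : 0 ≤ q + t)
    (hr : p + q + r0 = a)
    (h : coeff (ee (p + s).toNat (q + t).toNat) (FF a s' t' i j r (mon p q)) ≠ 0) :
    s' = s ∧ t' = t ∧ (-s).toNat + i ≤ p ∧ (-t).toNat + j ≤ q ∧ r ≤ r0 := by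
  rw [FF_mon, ff_sub_cast hr, coeff_smul, coeff_mon, smul_eq_mul] at h
  have h1 : (-s').toNat + i ≤ p := by
    by_contra hh; rw [ff_eq_zero (by omega)] at h; simp at h
  have h2 : (-t').toNat + j ≤ q := by
    by_contra hh; rw [ff_eq_zero (p := q) (by omega)] at h; simp at h
  have h3 : r ≤ r0 := by
    by_contra hh; rw [ff_eq_zero (p := r0) (by omega)] at h; simp at h
  have h4 : (p + s').toNat = (p + s).toNat ∧ (q + t').toNat = (q + t).toNat := by
    by_contra hh; rw [if_neg hh] at h; simp at h
  have : s' = s := by omega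
  have : t' = t := by omega
  subst s' t'
  exact ⟨rfl, rfl, h1, h2, h3⟩

lemma key (a k : ℕ) (hk : k ≤ a) (c : Q4 →₀ ℂ) (hc : ∀ x, c x ≠ 0 → x ∈ Ik k) (s t : ℤ) (w : ℕ)
    (h : ∀ p q r, (-s).toNat ≤ p → (-t).toNat ≤ q → r < w → p + q + r = a →
      coeff (ee (p + s).toNat (q + t).toNat)
        (Finsupp.linearCombination ℂ (EE a) c (mon p q)) = 0) :
    ∀ N i r, i + r = N → r < w → c (s, t, i, r) = 0 := by
  intro N
  induction N using Nat.strong_induction_on with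
  | _ N ih =>
  intro i r hN hr
  by_contra hne
  have hI := hc _ hne
  simp only [Ik, uv, Set.mem_ofPred_eq] at hI
  have h1 := h ((-s).toNat + i) (a - (-s).toNat - i - r) r (by omega) (by omega) hr (by omega)
  set p := (-s).toNat + i with hp
  set q := a - (-s).toNat - i - r with hq
  rw [Finsupp.linearCombination_apply, Finsupp.sum, LinearMap.sum_apply, coeff_sum,
    Finset.sum_eq_single (s, t, i, r)] at h1
  · rw [LinearMap.smul_apply, coeff_smul, smul_eq_mul, EE, FF_mon] at h1
    simp only at h1
    rw [ff_sub_cast (r := r) (by omega), coeff_smul, coeff_mon, if_pos ⟨rfl, rfl⟩] at h1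
    have e1 := ff_ne_zero (p := p) (j := (-s).toNat + i) (by omega)
    have e2 := ff_ne_zero (p := q) (j := (-t).toNat + 0) (by omega)
    have e3 := ff_ne_zero (p := r) (j := r) (by omega)
    simp [hne, e1, e3] at h1
    simp at e2
    contradiction
  · rintro ⟨s', t', i', r'⟩ _ hx
    rw [LinearMap.smul_apply, coeff_smul, smul_eq_mul, EE]
    simp only
    by_contra hh
    have hh2 := right_ne_zero_of_mul hh
    obtain ⟨rfl, rfl, h3, h4, h5⟩ := coeff_FF_ne a s t s' t' i' 0 r' p q r (by omega) (by omega)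
      (by omega) hh2
    have hlt : i' + r' < N := by
      have : i' ≠ i ∨ r' ≠ r := by
        by_contra hcon
        push Not at hcon
        exact hx (by rw [hcon.1, hcon.2])
      omega
    exact left_ne_zero_of_mul hh (ih _ hlt i' r' rfl (by omega))
  · intro hx
    simp only [Finsupp.mem_support_iff, ne_eq, not_not] at hx
    exact absurd hx hne

/-- `w` for a shift. -/
def ww (a b : ℕ) (s t : ℤ) : ℕ := (s + t + a - b).toNat

/-- The final index set. -/
def Ikw (a b k : ℕ) : Set Q4 := {x | x ∈ Ik k ∧ ww a b x.1 x.2.1 ≤ x.2.2.2}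

lemma EE_li (a k : ℕ) (hk : k ≤ a) : LinearIndepOn ℂ (EE a) (Ik k) := by
  rw [linearIndepOn_iff]
  intro c hc h0
  rw [Finsupp.mem_supported] at hc
  ext ⟨s, t, i, r⟩
  refine key a k hk c (fun x hx => hc (by simpa using hx)) s t (r + 1) ?_ _ i r rfl (by omega)
  intro p q r _ _ _ _
  rw [h0]; simp

lemma mon_mem_Tmod {p q a : ℕ} (h : p + q ≤ a) : mon p q ∈ Tmod a :=
  Submodule.subset_span ⟨p, q, h, rfl⟩

lemma coeff_Tmod {a p q : ℕ} (h : a < p + q) {f : R2} (hf : f ∈ Tmod a) :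
    coeff (ee p q) f = 0 := by
  induction hf using Submodule.span_induction with
  | mem x hx =>
    obtain ⟨i, j, hij, rfl⟩ := hx
    have := coeff_mon i j p q
    rw [mon] at this
    rw [this, if_neg]
    omega
  | zero => simp
  | add x y _ _ hx hy => rw [coeff_add, hx, hy, add_zero]
  | smul c x _ hx => rw [coeff_smul, hx, smul_zero]

/-- Operators of order at most `k` from `𝒯_a` to `𝒯_b`. -/
def WW (a b k : ℕ) : Submodule ℂ (Module.End ℂ R2) where
  carrier := {A | A ∈ DO k ∧ ∀ f ∈ Tmod a, A f ∈ Tmod b}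
  zero_mem' := ⟨Submodule.zero_mem _, fun f _ => by simp⟩
  add_mem' := fun hA hB => ⟨Submodule.add_mem _ hA.1 hB.1, fun f hf =>
    Submodule.add_mem _ (hA.2 f hf) (hB.2 f hf)⟩
  smul_mem' := fun c _ hA => ⟨Submodule.smul_mem _ _ hA.1, fun f hf =>
    Submodule.smul_mem _ _ (hA.2 f hf)⟩

lemma WW_eq (a b k : ℕ) (hk : k ≤ a) : WW a b k = Submodule.span ℂ (EE a '' Ikw a b k) := by
  apply le_antisymm
  · rintro A ⟨hA, hT⟩
    rw [DO_eq a, SpD_eq_SpE, SpE_eq, Finsupp.mem_span_image_iff_linearCombination] at hA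
    obtain ⟨c, hc, rfl⟩ := hA
    rw [Finsupp.mem_supported] at hc
    rw [Finsupp.mem_span_image_iff_linearCombination]
    refine ⟨c, ?_, rfl⟩
    rw [Finsupp.mem_supported]
    rintro ⟨s, t, i, r⟩ hx
    refine ⟨hc hx, ?_⟩
    by_contra hlt
    simp only [ww] at hlt
    have hx' : c (s, t, i, r) ≠ 0 := by simpa using hx
    refine hx' (key a k hk c (fun x hx => hc (by simpa using hx)) s t (ww a b s t) ?_ _ i r rfl ?_)
    · intro p q r hp hq hr hpq
      refine coeff_Tmod ?_ (hT _ (mon_mem_Tmod (by omega)))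
      simp only [ww] at hr
      omega
    · simp only [ww]; omega
  · rw [Submodule.span_le]
    rintro _ ⟨⟨s, t, i, r⟩, ⟨hx, hw⟩, rfl⟩
    constructor
    · rw [DO_eq a, SpD_eq_SpE, SpE_eq]
      exact Submodule.subset_span ⟨_, hx, rfl⟩
    · intro f hf
      induction hf using Submodule.span_induction with
      | mem f hf =>
        obtain ⟨p, q, hpq, rfl⟩ := hf
        change EE a (s, t, i, r) (mon p q) ∈ _
        simp only [EE, FF_mon]
        obtain ⟨r0, hr0⟩ : ∃ r0, p + q + r0 = a := ⟨a - p - q, by omega⟩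
        rw [ff_sub_cast hr0]
        simp only [ww] at hw
        rcases lt_or_ge r0 r with h | h
        · rw [ff_eq_zero h]; simp
        rcases lt_or_ge p ((-s).toNat + i) with h1 | h1
        · rw [ff_eq_zero h1]; simp
        rcases lt_or_ge q ((-t).toNat + 0) with h2 | h2
        · rw [ff_eq_zero h2]; simp
        exact Submodule.smul_mem _ _ (mon_mem_Tmod (by omega))
      | zero => simp
      | add x y _ _ hx hy => rw [map_add]; exact Submodule.add_mem _ hx hy
      | smul c x _ hx => rw [map_smul]; exact Submodule.smul_mem _ _ hx

/-- The level set of shifts. -/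
def Hex (a b : ℕ) (l : ℕ) : Finset (ℤ × ℤ) :=
  (Finset.Icc (-(l : ℤ)) (l + b - a) ×ˢ Finset.Icc (-(l : ℤ)) (l + b - a)).filter
    fun x => uv x.1 x.2 + ww a b x.1 x.2 ≤ l

/-- Count index. -/
def Cnt (a b k : ℕ) : Finset ((_ : ℕ) × (_ : ℕ) × (ℤ × ℤ)) :=
  (Finset.range (k + 1)).sigma fun m => (Finset.range (m + 1)).sigma fun l => Hex a b l

lemma mem_Hex (a b l : ℕ) (s t : ℤ) : (s, t) ∈ Hex a b l ↔ uv s t + ww a b s t ≤ l := by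
  rw [Hex, Finset.mem_filter, Finset.mem_product, Finset.mem_Icc, Finset.mem_Icc]
  simp only [uv, ww]
  omega

/-- The reindexing map. -/
def phi (a b k : ℕ) (y : (_ : ℕ) × (_ : ℕ) × (ℤ × ℤ)) : Q4 :=
  (y.2.2.1, y.2.2.2, k - y.1, y.1 - y.2.1 + ww a b y.2.2.1 y.2.2.2)

lemma mem_Cnt (a b k m l : ℕ) (s t : ℤ) : (⟨m, l, (s, t)⟩ : (_ : ℕ) × (_ : ℕ) × (ℤ × ℤ)) ∈
    Cnt a b k ↔ m ≤ k ∧ l ≤ m ∧ uv s t + ww a b s t ≤ l := by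
  simp only [Cnt, Finset.mem_sigma, Finset.mem_range, mem_Hex]
  omega

lemma Ikw_eq (a b k : ℕ) : Ikw a b k = ↑((Cnt a b k).image (phi a b k)) := by
  ext ⟨s, t, i, r⟩
  rw [Finset.coe_image, Set.mem_image]
  constructor
  · rintro ⟨h1, h2⟩
    have h1' : uv s t + i + r ≤ k := h1
    have h2' : ww a b s t ≤ r := h2
    refine ⟨⟨k - i, k - i - r + ww a b s t, (s, t)⟩, ?_, ?_⟩
    · rw [Finset.mem_coe, mem_Cnt]; omega
    · simp only [phi, Prod.mk.injEq, true_and]; omega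
  · rintro ⟨⟨m, l, s', t'⟩, hy, he⟩
    rw [Finset.mem_coe, mem_Cnt] at hy
    simp only [phi, Prod.mk.injEq] at he
    obtain ⟨rfl, rfl, h3, h4⟩ := he
    constructor
    · change uv s' t' + i + r ≤ k
      omega
    · change ww a b s' t' ≤ r
      omega

lemma phi_inj (a b k : ℕ) : Set.InjOn (phi a b k) (Cnt a b k) := by
  rintro ⟨m, l, s, t⟩ hy ⟨m', l', s', t'⟩ hy' he
  rw [Finset.mem_coe, mem_Cnt] at hy hy'
  simp only [phi, Prod.mk.injEq] at he
  obtain ⟨rfl, rfl, h3, h4⟩ := he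
  obtain rfl : m = m' := by omega
  obtain rfl : l = l' := by omega
  rfl

lemma WW_finite (a b k : ℕ) (hk : k ≤ a) : Module.Finite ℂ (WW a b k) := by
  rw [WW_eq a b k hk, Ikw_eq]
  exact Module.Finite.span_of_finite ℂ ((Finset.finite_toSet _).image _)

lemma WW_finrank (a b k : ℕ) (hk : k ≤ a) : Module.finrank ℂ (WW a b k) = 
    ∑ m ∈ Finset.range (k + 1), ∑ l ∈ Finset.range (m + 1), (Hex a b l).card := by
  have hli : LinearIndepOn ℂ (EE a) (Ikw a b k) := (EE_li a k hk).mono fun x hx => hx.1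
  rw [WW_eq a b k hk]
  rw [Ikw_eq] at hli ⊢
  rw [Set.image_eq_range, finrank_span_eq_card hli]
  change Fintype.card ↥((Cnt a b k).image (phi a b k)) = _
  rw [Fintype.card_coe, Finset.card_image_of_injOn (phi_inj a b k), Cnt, Finset.card_sigma]
  simp only [Finset.card_sigma]

lemma sum_abs (A B : ℕ) (C : ℤ) : 2 * ∑ s ∈ Finset.Icc (-(A : ℤ)) B, (C - |s|) =
    2 * (A + B + 1) * C - A * (A + 1) - B * (B + 1) := by
  induction A with
  | zero =>
    induction B with
    | zero => simp
    | succ B ih =>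
      have : Finset.Icc (-((0 : ℕ) : ℤ)) ((B + 1 : ℕ) : ℤ) =
          insert ((B : ℤ) + 1) (Finset.Icc (-((0 : ℕ) : ℤ)) B) := by
        ext x; simp only [Finset.mem_Icc, Finset.mem_insert]; omega
      rw [this, Finset.sum_insert (by simp), mul_add, ih,
        abs_of_nonneg (by positivity : (0 : ℤ) ≤ (B : ℤ) + 1)]
      push_cast; ring
  | succ A ih =>
    have : Finset.Icc (-((A + 1 : ℕ) : ℤ)) (B : ℤ) =
        insert (-((A : ℤ) + 1)) (Finset.Icc (-(A : ℤ)) B) := by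
      ext x; simp only [Finset.mem_Icc, Finset.mem_insert]; omega
    rw [this, Finset.sum_insert (by simp), mul_add, ih, abs_neg,
      abs_of_nonneg (by positivity : (0 : ℤ) ≤ (A : ℤ) + 1)]
    push_cast; ring

lemma Hex_card_zero (a b l : ℕ) (h : l + b < a) : (Hex a b l).card = 0 := by
  rw [Finset.card_eq_zero, Finset.eq_empty_iff_forall_notMem]
  rintro ⟨s, t⟩ hx
  rw [mem_Hex] at hx
  simp only [uv, ww] at hx
  omega

lemma Hex_card (a b l B : ℕ) (h : l + b = a + B) :
    2 * ((Hex a b l).card : ℤ) = 2 * l * B + (l + B + 1) * (l + B + 2) := by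
  have e : Hex a b l = ((Finset.Icc (-(l : ℤ)) B).sigma fun s : ℤ =>
      Finset.Icc (-((l : ℤ) - (-s).toNat)) (B - l - s + (l - (-s).toNat))).image
      (fun x => (x.1, x.2)) := by
    ext ⟨s, t⟩
    rw [mem_Hex]
    simp only [uv, ww, Finset.mem_image, Finset.mem_sigma, Finset.mem_Icc, Prod.mk.injEq]
    constructor
    · intro hx
      exact ⟨⟨s, t⟩, by constructor <;> constructor <;> simp only <;> omega, rfl, rfl⟩
    · rintro ⟨⟨s', t'⟩, hx, rfl, rfl⟩
      simp only at hx ⊢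
      omega
  rw [e, Finset.card_image_of_injective _ (by rintro ⟨s, t⟩ ⟨s', t'⟩ hh; simp at hh; simp [hh]),
    Finset.card_sigma]
  push_cast
  rw [Finset.sum_congr rfl (g := fun s => ((l : ℤ) + B + 1) - |s|), sum_abs]
  · ring
  · intro s hs
    rw [Finset.mem_Icc] at hs
    rw [Int.card_Icc]
    rcases abs_cases s with hh | hh <;> omega

lemma G_card (a b m : ℕ) :
    2 * (∑ l ∈ Finset.range (m + 1), ((Hex a b l).card : ℤ)) =
      if m + b < a then 0 else ((m : ℤ) + 1) * (m + b - a + 1) * (2 * m + b - a + 2) := by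
  induction m with
  | zero =>
    split_ifs with h
    · simp [Hex_card_zero a b 0 h]
    · obtain ⟨B, hB⟩ : ∃ B, 0 + b = a + B := ⟨b - a, by omega⟩
      have hB' : (b : ℤ) = a + B := by omega
      have := Hex_card a b 0 B hB
      simp [this, hB']
  | succ m ih =>
    rw [Finset.sum_range_succ, mul_add, ih]
    split_ifs with h1 h2 h2
    · simp [Hex_card_zero a b (m + 1) h2]
    · have := Hex_card a b (m + 1) 0 (by omega)
      have hB' : (a : ℤ) = m + 1 + b := by omega
      rw [this, hB']
      push_cast; ring
    · omega
    · obtain ⟨B, hB⟩ : ∃ B, m + b = a + B := ⟨m + b - a, by omega⟩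
      have hB' : (b : ℤ) = a + B - m := by omega
      have := Hex_card a b (m + 1) (B + 1) (by omega)
      rw [this, hB']
      push_cast; ring

lemma F_card (a b k : ℕ) :
    4 * (∑ m ∈ Finset.range (k + 1), ∑ l ∈ Finset.range (m + 1), ((Hex a b l).card : ℤ)) =
      if k + b < a then 0 else
        ((k : ℤ) + 1) * (k + 2) * ((k + 1) * (k + 2) + (b - a) * (2 * k + 3) + (b - a) ^ 2) := by
  induction k with
  | zero =>
    have := G_card a b 0
    rw [Finset.sum_range_one]
    split_ifs at this ⊢ <;> push_cast at this ⊢ <;> linarith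
  | succ k ih =>
    have := G_card a b (k + 1)
    rw [Finset.sum_range_succ, mul_add, ih]
    split_ifs at this ⊢ with h1 h2 h2
    · linarith
    · have hB' : (a : ℤ) = k + 1 + b := by omega
      rw [hB'] at this ⊢
      push_cast at this ⊢; linarith
    · omega
    · push_cast at this ⊢; linarith

lemma WW_finrank' (a b k : ℕ) (hk : k ≤ a) (h : a ≤ k + b) :
    4 * (Module.finrank ℂ (WW a b k) : ℤ) = 
      ((k : ℤ) + 1) * (k + 2) * ((k + 1) * (k + 2) + (b - a) * (2 * k + 3) + (b - a) ^ 2) := by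
  have := F_card a b k
  rw [if_neg (by omega)] at this
  rw [WW_finrank a b k hk, ← this]
  push_cast
  rfl

lemma matOp_apply (A B C D : Module.End ℂ R2) (u v : R2) :
    matOp A B C D (u, v) = (A u + B v, C u + D v) := rfl

/-- `matOp` as a linear map. -/
def matL : (Module.End ℂ R2 × Module.End ℂ R2) × (Module.End ℂ R2 × Module.End ℂ R2) →ₗ[ℂ]
    Module.End ℂ V2 where
  toFun x := matOp x.1.1 x.1.2 x.2.1 x.2.2
  map_add' x y := by
    refine LinearMap.ext fun w => ?_
    obtain ⟨u, v⟩ := w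
    rw [LinearMap.add_apply, matOp_apply, matOp_apply, matOp_apply, Prod.mk_add_mk]
    simp only [Prod.fst_add, Prod.snd_add, LinearMap.add_apply]
    exact congrArg₂ Prod.mk (add_add_add_comm _ _ _ _) (add_add_add_comm _ _ _ _)
  map_smul' c x := by
    refine LinearMap.ext fun w => ?_
    simp [matOp]

lemma matL_inj : Function.Injective matL := by
  rintro ⟨⟨A, B⟩, C, D⟩ ⟨⟨A', B'⟩, C', D'⟩ h
  have h1 : ∀ u v, matOp A B C D (u, v) = matOp A' B' C' D' (u, v) := fun u v =>
    LinearMap.congr_fun h (u, v)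
  simp only [matOp_apply, Prod.mk.injEq] at h1 ⊢
  refine ⟨⟨?_, ?_⟩, ?_, ?_⟩ <;> refine LinearMap.ext fun u => ?_
  · simpa using (h1 u 0).1
  · simpa using (h1 0 u).1
  · simpa using (h1 u 0).2
  · simpa using (h1 0 u).2

lemma span_eq (a b k : ℕ) : Submodule.span ℂ
      {T : Module.End ℂ V2 | IsMatDiffOpLE T k ∧
        ∀ w ∈ (Tmod a).prod (Tmod b), T w ∈ (Tmod a).prod (Tmod b)} =
    (((WW a a k).prod (WW b a k)).prod ((WW a b k).prod (WW b b k))).map matL := by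
  apply le_antisymm
  · rw [Submodule.span_le]
    rintro _ ⟨⟨A, B, C, D, hA, hB, hC, hD, rfl⟩, hT⟩
    have h1 : ∀ u ∈ Tmod a, A u ∈ Tmod a ∧ C u ∈ Tmod b := fun u hu => by
      have := hT (u, 0) ⟨hu, Submodule.zero_mem _⟩
      rw [matOp_apply, Submodule.mem_prod] at this
      simpa using this
    have h2 : ∀ u ∈ Tmod b, B u ∈ Tmod a ∧ D u ∈ Tmod b := fun u hu => by
      have := hT (0, u) ⟨Submodule.zero_mem _, hu⟩
      rw [matOp_apply, Submodule.mem_prod] at this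
      simpa using this
    exact ⟨((A, B), (C, D)), ⟨⟨⟨hA, fun u hu => (h1 u hu).1⟩, ⟨hB, fun u hu => (h2 u hu).1⟩⟩,
      ⟨⟨hC, fun u hu => (h1 u hu).2⟩, ⟨hD, fun u hu => (h2 u hu).2⟩⟩⟩, rfl⟩
  · rintro _ ⟨⟨⟨A, B⟩, C, D⟩, ⟨⟨hA, hB⟩, hC, hD⟩, rfl⟩
    refine Submodule.subset_span ⟨⟨A, B, C, D, hA.1, hB.1, hC.1, hD.1, rfl⟩, ?_⟩
    rintro ⟨u, v⟩ ⟨hu, hv⟩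
    exact ⟨Submodule.add_mem _ (hA.2 u hu) (hB.2 v hv), Submodule.add_mem _ (hC.2 u hu) (hD.2 v hv)⟩

/-- A product submodule is the product of the submodules. -/
def prodSubEquiv {M N : Type*} [AddCommGroup M] [Module ℂ M] [AddCommGroup N] [Module ℂ N]
    (p : Submodule ℂ M) (q : Submodule ℂ N) : (p.prod q) ≃ₗ[ℂ] p × q where
  toFun x := (⟨x.1.1, x.2.1⟩, ⟨x.1.2, x.2.2⟩)
  invFun y := ⟨(y.1.1, y.2.1), ⟨y.1.2, y.2.2⟩⟩
  map_add' _ _ := rfl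
  map_smul' _ _ := rfl
  left_inv _ := rfl
  right_inv _ := rfl

lemma finrank_prod_sub {M N : Type*} [AddCommGroup M] [Module ℂ M] [AddCommGroup N] [Module ℂ N]
    (p : Submodule ℂ M) (q : Submodule ℂ N) [Module.Finite ℂ p] [Module.Finite ℂ q] :
    Module.Finite ℂ (p.prod q) ∧
    Module.finrank ℂ (p.prod q) = Module.finrank ℂ p + Module.finrank ℂ q :=
  ⟨Module.Finite.equiv (prodSubEquiv p q).symm, by
    rw [LinearEquiv.finrank_eq (prodSubEquiv p q), Module.finrank_prod]⟩

theorem stmt17 (n Δ k : ℕ) (hΔk : Δ ≤ k) (hkn : k + Δ ≤ n) :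
    2 * Module.finrank ℂ ↥(Submodule.span ℂ
      {T : Module.End ℂ V2 | IsMatDiffOpLE T k ∧
        ∀ w ∈ (Tmod (n - Δ)).prod (Tmod n), T w ∈ (Tmod (n - Δ)).prod (Tmod n)}) =
      (k + 1) * (k + 2) * (2 * k ^ 2 + 6 * k + 4 + Δ ^ 2) := by
  obtain ⟨a, rfl⟩ : ∃ a, n = a + Δ := ⟨n - Δ, by omega⟩
  rw [Nat.add_sub_cancel, span_eq,
    ← (Submodule.equivMapOfInjective matL matL_inj _).finrank_eq]
  have f1 := WW_finite a a k (by omega)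
  have f2 := WW_finite (a + Δ) a k (by omega)
  have f3 := WW_finite a (a + Δ) k (by omega)
  have f4 := WW_finite (a + Δ) (a + Δ) k (by omega)
  obtain ⟨g1, e1⟩ := finrank_prod_sub (WW a a k) (WW (a + Δ) a k)
  obtain ⟨g2, e2⟩ := finrank_prod_sub (WW a (a + Δ) k) (WW (a + Δ) (a + Δ) k)
  obtain ⟨_, e3⟩ := finrank_prod_sub ((WW a a k).prod (WW (a + Δ) a k))
    ((WW a (a + Δ) k).prod (WW (a + Δ) (a + Δ) k))
  rw [e3, e1, e2]
  have d1 := WW_finrank' a a k (by omega) (by omega)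
  have d2 := WW_finrank' (a + Δ) a k (by omega) (by omega)
  have d3 := WW_finrank' a (a + Δ) k (by omega) (by omega)
  have d4 := WW_finrank' (a + Δ) (a + Δ) k (by omega) (by omega)
  zify
  push_cast at d1 d2 d3 d4
  linarith
end
end
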